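/- Maxwell's equations from distributions of Lienard–Wiechert potentials: Let τ > 0 and r > 0. Let f ∈ C¹([0,τ)×ℝ³×ℝ³) vanish for |ξ| > r and satisfy the local conservation law ∂_t ρ_f + div_x j_f = 0, where ρ_f = ∫ f dξ and j_f = ∫ v(ξ) f dξ. Let u ∈ C²([0,τ)×ℝ³×ℝ³) vanish for |ξ| > r and solve, for each fixed ξ, the wave equation ∂_t²u − Δ_x u = f with u(0,x,ξ) = ∂_t u(0,x,ξ) = 0. Let E^in, B^in ∈ C²(ℝ³;ℝ³) satisfy div_x B^in = 0 and div_x E^in = ρ_f(0,·). Let A_I ∈ C²(ℝ³;ℝ³) satisfy div_x A_I = 0 and curl_x A_I = B^in, and let A⁰ ∈ C²([0,τ)×ℝ³;ℝ³) solve ∂_t²A⁰ − Δ_x A⁰ = 0 with A⁰(0,·) = A_I and ∂_t A⁰(0,·) = −E^in. Define φ(t,x) = ∫_{ℝ³} u(t,x,ξ) dξ, A(t,x) = A⁰(t,x) + ∫_{ℝ³} v(ξ) u(t,x,ξ) dξ, E = −∂_t A − ∇_x φ and B = curl_x A. Then ∂_t E − curl_x B = −j_f, div_x E = ρ_f, ∂_t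 B + curl_x E = 0, div_x B = 0, and E(0,·) = E^in, B(0,·) = B^in. -/

import Mathlib

open MeasureTheory Real Set Filter Metric RealInnerProductSpace
open scoped ENNReal NNReal Topology

noncomputable section

/-- Physical space `ℝ³` with its Euclidean structure. -/
abbrev E3 : Type := EuclideanSpace ℝ (Fin 3)

/-- The `i`-th standard basis vector of `ℝ³`. -/
def e3 (i : Fin 3) : E3 := EuclideanSpace.single i 1

/-- The relativistic velocity `v(ξ) = ξ/√(1+|ξ|²)`. -/
def vrel (ξ : E3) : E3 := (Real.sqrt (1 + ‖ξ‖ ^ 2))⁻¹ • ξ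

/-- Partial derivative in the `i`-th coordinate direction. -/
def pd3 (u : E3 → ℝ) (i : Fin 3) (x : E3) : ℝ := fderiv ℝ u x (e3 i)

/-- Divergence of a vector field on `ℝ³`. -/
def divg (F : E3 → E3) (x : E3) : ℝ := ∑ i : Fin 3, pd3 (fun y => F y i) i x

/-- Curl of a vector field on `ℝ³`. -/
def curl3 (F : E3 → E3) (x : E3) : E3 :=
  (WithLp.equiv 2 (Fin 3 → ℝ)).symm
    ![pd3 (fun y => F y 2) 1 x - pd3 (fun y => F y 1) 2 x,
      pd3 (fun y => F y 0) 2 x - pd3 (fun y => F y 2) 0 x,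
      pd3 (fun y => F y 1) 0 x - pd3 (fun y => F y 0) 1 x]

/-- Time derivative on `[0,∞)` (one-sided at `t = 0`, the usual derivative at interior
points). -/
def timeD {α : Type*} [NormedAddCommGroup α] [NormedSpace ℝ α] (G : ℝ → α) (t : ℝ) : α :=
  derivWithin G (Set.Ici 0) t

/-- Laplacian of a scalar function on `ℝ³`. -/
def lapx (w : E3 → ℝ) (x : E3) : ℝ :=
  ∑ i : Fin 3, fderiv ℝ (fun y => fderiv ℝ w y (e3 i)) x (e3 i)

/-- Laplacian of a vector field on `ℝ³`. -/
def lapxV (F : E3 → E3) (x : E3) : E3 :=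
  ∑ i : Fin 3, fderiv ℝ (fun y => fderiv ℝ F y (e3 i)) x (e3 i)

/-- The scalar potential `φ(t,x) = ∫ u(t,x,ξ) dξ`. -/
def phiP (u : ℝ → E3 → E3 → ℝ) (t : ℝ) (x : E3) : ℝ := ∫ ξ : E3, u t x ξ

/-- The vector potential `A(t,x) = A⁰(t,x) + ∫ v(ξ) u(t,x,ξ) dξ`. -/
def AP (A0 : ℝ → E3 → E3) (u : ℝ → E3 → E3 → ℝ) (t : ℝ) (x : E3) : E3 :=
  A0 t x + ∫ ξ : E3, u t x ξ • vrel ξ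

/-- The electric field `E = -∂ₜA - ∇ₓφ`. -/
def EP (A0 : ℝ → E3 → E3) (u : ℝ → E3 → E3 → ℝ) (t : ℝ) (x : E3) : E3 :=
  -timeD (fun s => AP A0 u s x) t - gradient (phiP u t) x

/-- The magnetic field `B = curlₓ A`. -/
def BP (A0 : ℝ → E3 → E3) (u : ℝ → E3 → E3 → ℝ) (t : ℝ) (x : E3) : E3 :=
  curl3 (AP A0 u t) x

/-!
The potentials solve `□φ = ρ` and `□A = j` with `□ = ∂ₜ² - Δ`, so the gauge quantity
`G = ∂ₜφ + div A` formally solves `□G = ∂ₜρ + div j = 0`. Its Cauchy data vanish: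
`G(0) = div A_I = 0` and `∂ₜG(0) = ρ(0) - div E^in = 0`. The energy estimate in backward light cones
then gives `G = 0`, and with this Lorenz gauge condition Maxwell's equations are identities of
vector calculus. Since `G` is only `C¹`, the energy estimate is applied to its convolutions `η ⋆ G`
in space.
-/

section ParametricIntegral

variable {P X V : Type*} [NormedAddCommGroup P] [NormedSpace ℝ P]
  [NormedAddCommGroup V] [NormedSpace ℝ V] {S : Set P} {K : Set X}

lemma eventually_forall_norm_sub_sub_le [TopologicalSpace X] {F : P → X → V}
    {F' : P → X → P →L[ℝ] V} {p : P} {ε : ℝ} (hS : Convex ℝ S) (hK : IsCompact K)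
    (hF' : ContinuousOn (Function.uncurry F') (S ×ˢ univ))
    (hd : ∀ q ∈ S, ∀ x, HasFDerivWithinAt (F · x) (F' q x) S q) (hp : p ∈ S) (hε : 0 < ε) :
    ∀ᶠ q in 𝓝[S] p, ∀ x ∈ K, ‖F q x - F p x - F' p x (q - p)‖ ≤ ε * ‖q - p‖ := by
  obtain ⟨N, hN, hF'N⟩ := hK.mem_uniformity_of_prod
    (hF'.mono (prod_mono_right (subset_univ K))) hp (dist_mem_uniformity hε)
  obtain ⟨δ, hδ, hδN⟩ := mem_nhdsWithin_iff.1 hN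
  filter_upwards [inter_mem_nhdsWithin S (ball_mem_nhds p hδ)] with q hq x hx
  refine ((convex_ball p δ).inter hS).norm_image_sub_le_of_norm_hasFDerivWithin_le'
    (fun q hq ↦ (hd q hq.2 x).mono inter_subset_right) (fun q hq ↦ ?_)
    ⟨mem_ball_self hδ, hp⟩ ⟨hq.2, hq.1⟩
  simpa only [dist_eq_norm] using (show dist (F' q x) (F' p x) < ε from hF'N q (hδN hq) x hx).le

variable [NormedAddCommGroup X]

lemma hasFDerivWithinAt_integral [MeasurableSpace X] [BorelSpace X] {μ : Measure X}
    [IsFiniteMeasureOnCompacts μ] {F : P → X → V} {F' : P → X → P →L[ℝ] V} {p : P}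
    (hS : Convex ℝ S) (hK : IsCompact K)
    (hF : ContinuousOn (Function.uncurry F) (S ×ˢ univ))
    (hF' : ContinuousOn (Function.uncurry F') (S ×ˢ univ))
    (hd : ∀ q ∈ S, ∀ x, HasFDerivWithinAt (F · x) (F' q x) S q)
    (h0 : ∀ q ∈ S, ∀ x ∉ K, F q x = 0) (h0' : ∀ x ∉ K, F' p x = 0) (hp : p ∈ S) :
    HasFDerivWithinAt (fun q ↦ ∫ x, F q x ∂μ) (∫ x, F' p x ∂μ) S p := by
  have hI : ∀ q ∈ S, Integrable (F q) μ := fun q hq ↦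
    (continuousOn_univ.1 (hF.uncurry_left q hq)).integrable_of_hasCompactSupport
      (.intro hK (h0 q hq))
  have hI' : Integrable (F' p) μ :=
    (continuousOn_univ.1 (hF'.uncurry_left p hp)).integrable_of_hasCompactSupport (.intro hK h0')
  rw [hasFDerivWithinAt_iff_isLittleO, Asymptotics.isLittleO_iff]
  intro ε hε
  set m := μ.real K
  have hm : 0 ≤ m := measureReal_nonneg
  filter_upwards [self_mem_nhdsWithin,
    eventually_forall_norm_sub_sub_le hS hK hF' hd hp (show 0 < ε / (m + 1) by positivity)]
    with q hq hle
  have hint : (∫ x, F q x ∂μ) - (∫ x, F p x ∂μ) - (∫ x, F' p x ∂μ) (q - p)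
      = ∫ x in K, (F q x - F p x - F' p x (q - p)) ∂μ := by
    have hsub : Integrable (fun x ↦ F q x - F p x) μ := (hI q hq).sub (hI p hp)
    rw [ContinuousLinearMap.integral_apply hI', ← integral_sub (hI q hq) (hI p hp),
      ← integral_sub hsub (hI'.apply_continuousLinearMap _)]
    refine (setIntegral_eq_integral_of_forall_compl_eq_zero fun x hx ↦ ?_).symm
    simp [h0 q hq x hx, h0 p hp x hx, h0' x hx]
  rw [hint]
  calc ‖∫ x in K, (F q x - F p x - F' p x (q - p)) ∂μ‖
      ≤ ε / (m + 1) * ‖q - p‖ * m := norm_setIntegral_le_of_norm_le_const hK.measure_lt_top hle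
    _ = ε * ‖q - p‖ * (m / (m + 1)) := by ring
    _ ≤ ε * ‖q - p‖ := mul_le_of_le_one_right (by positivity) (div_le_one_of_le₀ (by linarith)
        (by linarith [hm]))

variable [NormedSpace ℝ X] {F : P → X → V}

lemma hasFDerivWithinAt_left (hF : DifferentiableOn ℝ (Function.uncurry F) (S ×ˢ univ)) {p : P}
    (hp : p ∈ S) (x : X) :
    HasFDerivWithinAt (F · x) ((fderivWithin ℝ (Function.uncurry F) (S ×ˢ univ) (p, x)).comp
      (ContinuousLinearMap.inl ℝ P X)) S p :=
  (hF (p, x) ⟨hp, mem_univ x⟩).hasFDerivWithinAt.comp (f := fun q ↦ (q, x)) p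
    (hasFDerivAt_prodMk_left p x).hasFDerivWithinAt fun _ hq ↦ ⟨hq, mem_univ x⟩

lemma contDiffOn_fderivWithin_left {m n : WithTop ℕ∞} (hS : UniqueDiffOn ℝ S)
    (hF : ContDiffOn ℝ n (Function.uncurry F) (S ×ˢ univ)) (hmn : m + 1 ≤ n) :
    ContDiffOn ℝ m (Function.uncurry fun p x ↦ fderivWithin ℝ (F · x) S p) (S ×ˢ univ) := by
  refine ((hF.fderivWithin (hS.prod uniqueDiffOn_univ) hmn).clm_comp
    (contDiffOn_const (c := ContinuousLinearMap.inl ℝ P X))).congr ?_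
  rintro ⟨p, x⟩ ⟨hp, -⟩
  have hn : n ≠ 0 := (zero_lt_one.trans_le (le_add_self.trans hmn)).ne'
  exact (hasFDerivWithinAt_left (hF.differentiableOn hn) hp x).fderivWithin (hS p hp)

lemma fderivWithin_eq_zero_of_eqOn_zero {g : P → V} (h : ∀ q ∈ S, g q = 0) {p : P} (hp : p ∈ S) :
    fderivWithin ℝ g S p = 0 := by
  rw [fderivWithin_congr h (h p hp), fderivWithin_const_apply]

variable [MeasurableSpace X] [BorelSpace X] {μ : Measure X} [IsFiniteMeasureOnCompacts μ]

lemma hasFDerivWithinAt_integral_of_contDiffOn (hS : Convex ℝ S) (hS' : UniqueDiffOn ℝ S)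
    (hK : IsCompact K) (hF : ContDiffOn ℝ 1 (Function.uncurry F) (S ×ˢ univ))
    (h0 : ∀ q ∈ S, ∀ x ∉ K, F q x = 0) {p : P} (hp : p ∈ S) :
    HasFDerivWithinAt (fun q ↦ ∫ x, F q x ∂μ) (∫ x, fderivWithin ℝ (F · x) S p ∂μ) S p :=
  hasFDerivWithinAt_integral hS hK hF.continuousOn
    (contDiffOn_fderivWithin_left (m := 0) hS' hF (by norm_num)).continuousOn
    (fun _ hq x ↦ (hasFDerivWithinAt_left (hF.differentiableOn one_ne_zero) hq
      x).differentiableWithinAt.hasFDerivWithinAt) h0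
    (fun x hx ↦ fderivWithin_eq_zero_of_eqOn_zero (fun q hq ↦ h0 q hq x hx) hp) hp

lemma fderivWithin_integral_apply (hS : Convex ℝ S) (hS' : UniqueDiffOn ℝ S)
    (hK : IsCompact K) (hF : ContDiffOn ℝ 1 (Function.uncurry F) (S ×ˢ univ))
    (h0 : ∀ q ∈ S, ∀ x ∉ K, F q x = 0) {p : P} (hp : p ∈ S) (v : P) :
    fderivWithin ℝ (fun q ↦ ∫ x, F q x ∂μ) S p v = ∫ x, fderivWithin ℝ (F · x) S p v ∂μ := by
  rw [(hasFDerivWithinAt_integral_of_contDiffOn hS hS' hK hF h0 hp).fderivWithin (hS' p hp),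
    ContinuousLinearMap.integral_apply]
  have hcont := (contDiffOn_fderivWithin_left (m := 0) hS' hF (by norm_num)).continuousOn
  exact (continuousOn_univ.1 (hcont.uncurry_left p hp)).integrable_of_hasCompactSupport
    (.intro hK fun x hx ↦ fderivWithin_eq_zero_of_eqOn_zero (fun q hq ↦ h0 q hq x hx) hp)

lemma contDiffOn_integral [FiniteDimensional ℝ P] (hS : Convex ℝ S) (hS' : UniqueDiffOn ℝ S)
    (hK : IsCompact K) {n : ℕ} (hF : ContDiffOn ℝ n (Function.uncurry F) (S ×ˢ univ))
    (h0 : ∀ q ∈ S, ∀ x ∉ K, F q x = 0) : ContDiffOn ℝ n (fun q ↦ ∫ x, F q x ∂μ) S := by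
  induction n generalizing F with
  | zero =>
    exact contDiffOn_zero.2
      (continuousOn_integral_of_compact_support hK hF.continuousOn fun q x hq ↦ h0 q hq x)
  | succ n ih =>
    have hF1 : ContDiffOn ℝ 1 (Function.uncurry F) (S ×ˢ univ) := hF.of_le (by simp)
    push_cast
    refine contDiffOn_succ_of_fderiv_apply
      (fun p hp ↦ (hasFDerivWithinAt_integral_of_contDiffOn hS hS' hK hF1 h0
        hp).differentiableWithinAt) (by simp) fun v ↦ ?_
    refine (ih ((contDiffOn_fderivWithin_left hS' hF (by simp)).clm_apply
      (contDiffOn_const (c := v))) fun q hq x hx ↦ ?_).congr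
      fun p hp ↦ fderivWithin_integral_apply hS hS' hK hF1 h0 hp v
    rw [fderivWithin_eq_zero_of_eqOn_zero (fun q hq ↦ h0 q hq x hx) hq,
      zero_apply]

end ParametricIntegral

section Slab

/-- The space-time slab `[0, τ) × E`. -/
def slab {E : Type*} (τ : ℝ) : Set (ℝ × E) := Ico 0 τ ×ˢ univ

variable {E V : Type*} {τ t : ℝ} {g h : ℝ × E → V}

lemma mem_slab (ht : t ∈ Ico 0 τ) (x : E) : (t, x) ∈ slab τ := ⟨ht, mem_univ x⟩

variable [TopologicalSpace E] [TopologicalSpace V]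

lemma slab_subset_closure_Ioo_prod : slab τ ⊆ closure (Ioo 0 τ ×ˢ (univ : Set E)) := by
  rintro ⟨t, x⟩ ⟨ht, -⟩
  rw [closure_prod_eq, closure_Ioo (ht.1.trans_lt ht.2).ne, closure_univ]
  exact ⟨Ico_subset_Icc_self ht, mem_univ x⟩

lemma slab_subset_closure_interior : (slab τ : Set (ℝ × E)) ⊆ closure (interior (slab τ)) := by
  rw [slab, interior_prod_eq, interior_Ico, interior_univ]
  exact slab_subset_closure_Ioo_prod

lemma eqOn_slab_of_eq_Ioo [T2Space V] (hg : ContinuousOn g (slab τ)) (hh : ContinuousOn h (slab τ))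
    (heq : ∀ t ∈ Ioo 0 τ, ∀ x, g (t, x) = h (t, x)) : EqOn g h (slab τ) :=
  EqOn.of_subset_closure (s := Ioo 0 τ ×ˢ univ) (fun p hp ↦ heq p.1 hp.1 p.2) hg hh
    (prod_mono_left Ioo_subset_Ico_self) slab_subset_closure_Ioo_prod

lemma continuous_slice (hg : ContinuousOn g (slab τ)) (ht : t ∈ Ico 0 τ) :
    Continuous (fun x ↦ g (t, x)) :=
  continuousOn_univ.1 (hg.comp (f := fun x ↦ (t, x)) (by fun_prop) fun x _ ↦ mem_slab ht x)

end Slab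

section SlabCalculus

variable {E V W : Type*} [NormedAddCommGroup E] [NormedSpace ℝ E]
  [NormedAddCommGroup V] [NormedSpace ℝ V] [NormedAddCommGroup W] [NormedSpace ℝ W]
  {τ t : ℝ} {g h : ℝ × E → V} {p : ℝ × E}

lemma convex_slab : Convex ℝ (slab τ : Set (ℝ × E)) := (convex_Ico 0 τ).prod convex_univ

lemma uniqueDiffOn_slab : UniqueDiffOn ℝ (slab τ : Set (ℝ × E)) :=
  (uniqueDiffOn_Ico 0 τ).prod uniqueDiffOn_univ

/-- The derivative of `g` in the space-time direction `v` relative to the slab `[0, τ) × E`: it is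
one-sided in time at `t = 0`. The time direction is `(1, 0)`, spatial directions are `(0, w)`. -/
def slabDeriv (τ : ℝ) (v : ℝ × E) (g : ℝ × E → V) (p : ℝ × E) : V :=
  fderivWithin ℝ g (slab τ) p v

lemma slabDeriv_eq_time_add_space (v : ℝ × E) :
    slabDeriv τ v g p = v.1 • slabDeriv τ (1, 0) g p + slabDeriv τ (0, v.2) g p := by
  simp only [slabDeriv]
  rw [← map_smul, ← map_add]
  simp

lemma slabDeriv_eq_of_hasFDerivWithinAt {L : ℝ × E →L[ℝ] V}
    (hL : HasFDerivWithinAt g L (slab τ) p) (hp : p ∈ slab τ) (v : ℝ × E) :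
    slabDeriv τ v g p = L v := by
  rw [slabDeriv, hL.fderivWithin (uniqueDiffOn_slab p hp)]

lemma contDiffOn_slabDeriv {m n : WithTop ℕ∞} (hg : ContDiffOn ℝ n g (slab τ)) (hmn : m + 1 ≤ n)
    (v : ℝ × E) : ContDiffOn ℝ m (slabDeriv τ v g) (slab τ) :=
  (hg.fderivWithin uniqueDiffOn_slab hmn).clm_apply contDiffOn_const

lemma continuousOn_slabDeriv (hg : ContDiffOn ℝ 1 g (slab τ)) (v : ℝ × E) :
    ContinuousOn (slabDeriv τ v g) (slab τ) :=
  (contDiffOn_slabDeriv (m := 0) hg (by norm_num) v).continuousOn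

lemma slabDeriv_congr (hgh : EqOn g h (slab τ)) (hp : p ∈ slab τ) (v : ℝ × E) :
    slabDeriv τ v g p = slabDeriv τ v h p := by
  rw [slabDeriv, fderivWithin_congr hgh (hgh hp), slabDeriv]

lemma slabDeriv_eq_zero_of_eqOn (hg : EqOn g 0 (slab τ)) (hp : p ∈ slab τ) (v : ℝ × E) :
    slabDeriv τ v g p = 0 := by
  rw [slabDeriv, fderivWithin_eq_zero_of_eqOn_zero hg hp, zero_apply]

lemma slabDeriv_eq_zero_off {K : Set E} (hK : IsClosed K)
    (h0 : ∀ t ∈ Ico 0 τ, ∀ x ∉ K, g (t, x) = 0) (v : ℝ × E) :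
    ∀ t ∈ Ico 0 τ, ∀ x ∉ K, slabDeriv τ v g (t, x) = 0 := by
  intro t ht x hx
  have hev : g =ᶠ[𝓝[slab τ] (t, x)] fun _ ↦ 0 := by
    filter_upwards [self_mem_nhdsWithin, mem_nhdsWithin_of_mem_nhds
      (continuous_snd.continuousAt.preimage_mem_nhds (hK.isOpen_compl.mem_nhds hx))]
      with q hq hqK using h0 q.1 hq.1 q.2 hqK
  rw [slabDeriv, hev.fderivWithin_eq (h0 t ht x hx), fderivWithin_const_apply, zero_apply]

lemma slabDeriv_add (hg : DifferentiableOn ℝ g (slab τ)) (hh : DifferentiableOn ℝ h (slab τ))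
    (hp : p ∈ slab τ) (v : ℝ × E) :
    slabDeriv τ v (fun q ↦ g q + h q) p = slabDeriv τ v g p + slabDeriv τ v h p :=
  slabDeriv_eq_of_hasFDerivWithinAt
    ((hg p hp).hasFDerivWithinAt.add (hh p hp).hasFDerivWithinAt) hp v

lemma slabDeriv_sub (hg : DifferentiableOn ℝ g (slab τ)) (hh : DifferentiableOn ℝ h (slab τ))
    (hp : p ∈ slab τ) (v : ℝ × E) :
    slabDeriv τ v (fun q ↦ g q - h q) p = slabDeriv τ v g p - slabDeriv τ v h p :=
  slabDeriv_eq_of_hasFDerivWithinAt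
    ((hg p hp).hasFDerivWithinAt.sub (hh p hp).hasFDerivWithinAt) hp v

lemma slabDeriv_sum {ι : Type*} [Fintype ι] {g : ι → ℝ × E → V}
    (hg : ∀ i, DifferentiableOn ℝ (g i) (slab τ)) (hp : p ∈ slab τ) (v : ℝ × E) :
    slabDeriv τ v (fun q ↦ ∑ i, g i q) p = ∑ i, slabDeriv τ v (g i) p := by
  rw [slabDeriv, fderivWithin_fun_sum (uniqueDiffOn_slab p hp) fun i _ ↦ hg i p hp, sum_apply]
  rfl

lemma slabDeriv_mul {g h : ℝ × E → ℝ} (hg : DifferentiableOn ℝ g (slab τ))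
    (hh : DifferentiableOn ℝ h (slab τ)) (hp : p ∈ slab τ) (v : ℝ × E) :
    slabDeriv τ v (fun q ↦ g q * h q) p = g p * slabDeriv τ v h p + slabDeriv τ v g p * h p := by
  rw [slabDeriv, fderivWithin_fun_mul (uniqueDiffOn_slab p hp) (hg p hp) (hh p hp)]
  simp only [add_apply, smul_apply, smul_eq_mul, slabDeriv]
  ring

lemma slabDeriv_clm (L : V →L[ℝ] W) (hg : DifferentiableOn ℝ g (slab τ)) (hp : p ∈ slab τ)
    (v : ℝ × E) : slabDeriv τ v (fun q ↦ L (g q)) p = L (slabDeriv τ v g p) :=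
  slabDeriv_eq_of_hasFDerivWithinAt
    (L.hasFDerivAt.comp_hasFDerivWithinAt p (hg p hp).hasFDerivWithinAt) hp v

lemma slabDeriv_comm (hg : ContDiffOn ℝ 2 g (slab τ)) (hp : p ∈ slab τ) (v w : ℝ × E) :
    slabDeriv τ v (slabDeriv τ w g) p = slabDeriv τ w (slabDeriv τ v g) p := by
  have hsymm : IsSymmSndFDerivWithinAt ℝ g (slab τ) p := (hg p hp).isSymmSndFDerivWithinAt
    (by simp) uniqueDiffOn_slab (slab_subset_closure_interior hp) hp
  have hdiff : DifferentiableWithinAt ℝ (fderivWithin ℝ g (slab τ)) (slab τ) p :=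
    (hg.fderivWithin (m := 1) uniqueDiffOn_slab (by norm_num)).differentiableOn one_ne_zero p hp
  have hsnd (v w : ℝ × E) : slabDeriv τ v (slabDeriv τ w g) p
      = fderivWithin ℝ (fderivWithin ℝ g (slab τ)) (slab τ) p v w := by
    rw [slabDeriv_eq_of_hasFDerivWithinAt (g := slabDeriv τ w g)
      (hdiff.hasFDerivWithinAt.clm_apply (hasFDerivWithinAt_const w p (slab τ))) hp]
    simp
  rw [hsnd, hsnd, hsymm v w]

lemma contDiffOn_two_of_slabDeriv [FiniteDimensional ℝ E] (hg : DifferentiableOn ℝ g (slab τ))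
    (htime : ContDiffOn ℝ 1 (slabDeriv τ (1, 0) g) (slab τ))
    (hspace : ∀ w, ContDiffOn ℝ 1 (slabDeriv τ (0, w) g) (slab τ)) :
    ContDiffOn ℝ 2 g (slab τ) := by
  rw [← one_add_one_eq_two]
  refine contDiffOn_succ_of_fderiv_apply hg (by simp) fun v ↦ ?_
  exact ((htime.const_smul v.1).add (hspace v.2)).congr fun p _ ↦ slabDeriv_eq_time_add_space v

lemma contDiff_slice {n : WithTop ℕ∞} (hg : ContDiffOn ℝ n g (slab τ)) (ht : t ∈ Ico 0 τ) :
    ContDiff ℝ n (fun x ↦ g (t, x)) :=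
  contDiffOn_univ.1 (hg.comp (f := fun x ↦ (t, x)) (by fun_prop) fun x _ ↦ mem_slab ht x)

lemma fderiv_slice (hg : DifferentiableOn ℝ g (slab τ)) (ht : t ∈ Ico 0 τ) (x w : E) :
    fderiv ℝ (fun y ↦ g (t, y)) x w = slabDeriv τ (0, w) g (t, x) := by
  have hslice := (hg _ (mem_slab ht x)).hasFDerivWithinAt.comp (f := fun y ↦ (t, y)) (s := univ) x
    (hasFDerivAt_prodMk_right t x).hasFDerivWithinAt fun y _ ↦ mem_slab ht y
  rw [show fderiv ℝ (fun y ↦ g (t, y)) x = _ from (hasFDerivWithinAt_univ.1 hslice).fderiv]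
  simp [slabDeriv]

lemma hasDerivWithinAt_slice (hg : DifferentiableOn ℝ g (slab τ)) (ht : t ∈ Ico 0 τ) (x : E) :
    HasDerivWithinAt (fun s ↦ g (s, x)) (slabDeriv τ (1, 0) g (t, x)) (Ico 0 τ) t := by
  simpa [Function.comp_def, slabDeriv] using
    ((hg _ (mem_slab ht x)).hasFDerivWithinAt.comp (f := fun s ↦ (s, x)) (s := Ico 0 τ) t
      (hasFDerivAt_prodMk_left t x).hasFDerivWithinAt fun s hs ↦ mem_slab hs x).hasDerivWithinAt

lemma hasDerivAt_slice (hg : DifferentiableOn ℝ g (slab τ)) (ht : t ∈ Ioo 0 τ) (x : E) :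
    HasDerivAt (fun s ↦ g (s, x)) (slabDeriv τ (1, 0) g (t, x)) t :=
  (hasDerivWithinAt_slice hg (Ioo_subset_Ico_self ht) x).hasDerivAt (Ico_mem_nhds ht.1 ht.2)

lemma Ico_mem_nhdsWithin_Ici (ht : t ∈ Ico 0 τ) : Ico 0 τ ∈ 𝓝[Ici 0] t :=
  inter_mem_nhdsWithin _ (Iio_mem_nhds ht.2)

lemma timeD_slice (hg : DifferentiableOn ℝ g (slab τ)) (ht : t ∈ Ico 0 τ) (x : E) :
    timeD (fun s ↦ g (s, x)) t = slabDeriv τ (1, 0) g (t, x) :=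
  ((hasDerivWithinAt_slice hg ht x).mono_of_mem_nhdsWithin
    (Ico_mem_nhdsWithin_Ici ht)).derivWithin (uniqueDiffOn_Ici 0 t ht.1)

lemma slabDeriv_space_eq_zero (hg : DifferentiableOn ℝ g (slab τ)) (ht : t ∈ Ico 0 τ)
    (h0 : ∀ y, g (t, y) = 0) (x w : E) : slabDeriv τ (0, w) g (t, x) = 0 := by
  rw [← fderiv_slice hg ht]
  simp [h0]

end SlabCalculus

section WaveOperator

variable {E V W ι : Type*} [NormedAddCommGroup E] [NormedSpace ℝ E]
  [NormedAddCommGroup V] [NormedSpace ℝ V] [NormedAddCommGroup W] [NormedSpace ℝ W] [Fintype ι]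
  {τ : ℝ} {e : ι → E} {g h : ℝ × E → V} {p : ℝ × E}

/-- The wave operator `∂ₜ² - ∑ᵢ ∂²_{eᵢ}` on the slab `[0, τ) × E`; for an orthonormal basis `e`
the sum is the Laplacian. -/
def waveOp (τ : ℝ) (e : ι → E) (g : ℝ × E → V) (p : ℝ × E) : V :=
  slabDeriv τ (1, 0) (slabDeriv τ (1, 0) g) p
    - ∑ i, slabDeriv τ (0, e i) (slabDeriv τ (0, e i) g) p

lemma continuousOn_waveOp (hg : ContDiffOn ℝ 2 g (slab τ)) :
    ContinuousOn (waveOp τ e g) (slab τ) := by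
  have hcont (v : ℝ × E) : ContinuousOn (slabDeriv τ v (slabDeriv τ v g)) (slab τ) :=
    continuousOn_slabDeriv (contDiffOn_slabDeriv hg (by norm_num) v) v
  exact (hcont _).sub (continuousOn_finsetSum _ fun i _ ↦ hcont _)

lemma waveOp_eq_deriv_sub_sum (hg : ContDiffOn ℝ 2 g (slab τ)) {t : ℝ} (ht : t ∈ Ioo 0 τ) (x : E) :
    waveOp τ e g (t, x) = deriv (fun s ↦ deriv (fun s' ↦ g (s', x)) s) t
      - ∑ i, fderiv ℝ (fun y ↦ fderiv ℝ (fun z ↦ g (t, z)) y (e i)) x (e i) := by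
  have hg1 : DifferentiableOn ℝ g (slab τ) := hg.differentiableOn two_ne_zero
  have hg2 (v : ℝ × E) : DifferentiableOn ℝ (slabDeriv τ v g) (slab τ) :=
    (contDiffOn_slabDeriv (m := 1) hg (by norm_num) v).differentiableOn one_ne_zero
  have ht' : t ∈ Ico 0 τ := Ioo_subset_Ico_self ht
  have htime : (fun s ↦ deriv (fun s' ↦ g (s', x)) s) =ᶠ[𝓝 t]
      fun s ↦ slabDeriv τ (1, 0) g (s, x) := by
    filter_upwards [Ioo_mem_nhds ht.1 ht.2] with s hs using (hasDerivAt_slice hg1 hs x).deriv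
  simp only [waveOp, htime.deriv_eq, (hasDerivAt_slice (hg2 (1, 0)) ht x).deriv,
    fderiv_slice hg1 ht', fderiv_slice (hg2 _) ht']

lemma eqOn_waveOp_of_eq_Ioo (hg : ContDiffOn ℝ 2 g (slab τ)) (hh : ContinuousOn h (slab τ))
    (heq : ∀ t ∈ Ioo 0 τ, ∀ x, deriv (fun s ↦ deriv (fun s' ↦ g (s', x)) s) t
      - ∑ i, fderiv ℝ (fun y ↦ fderiv ℝ (fun z ↦ g (t, z)) y (e i)) x (e i) = h (t, x)) :
    EqOn (waveOp τ e g) h (slab τ) :=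
  eqOn_slab_of_eq_Ioo (continuousOn_waveOp hg) hh fun t ht x ↦
    (waveOp_eq_deriv_sub_sum hg ht x).trans (heq t ht x)

lemma waveOp_add (hg : ContDiffOn ℝ 2 g (slab τ)) (hh : ContDiffOn ℝ 2 h (slab τ))
    (hp : p ∈ slab τ) :
    waveOp τ e (fun q ↦ g q + h q) p = waveOp τ e g p + waveOp τ e h p := by
  have hadd (v : ℝ × E) : slabDeriv τ v (slabDeriv τ v fun q ↦ g q + h q) p
      = slabDeriv τ v (slabDeriv τ v g) p + slabDeriv τ v (slabDeriv τ v h) p := by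
    rw [slabDeriv_congr (fun q hq ↦ slabDeriv_add (hg.differentiableOn two_ne_zero)
      (hh.differentiableOn two_ne_zero) hq v) hp]
    exact slabDeriv_add
      ((contDiffOn_slabDeriv (m := 1) hg (by norm_num) v).differentiableOn one_ne_zero)
      ((contDiffOn_slabDeriv (m := 1) hh (by norm_num) v).differentiableOn one_ne_zero) hp v
  simp only [waveOp, hadd, Finset.sum_add_distrib]
  abel

lemma waveOp_sum {κ : Type*} [Fintype κ] {g : κ → ℝ × E → V}
    (hg : ∀ k, ContDiffOn ℝ 2 (g k) (slab τ)) (hp : p ∈ slab τ) :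
    waveOp τ e (fun q ↦ ∑ k, g k q) p = ∑ k, waveOp τ e (g k) p := by
  have hsum (v : ℝ × E) : slabDeriv τ v (slabDeriv τ v fun q ↦ ∑ k, g k q) p
      = ∑ k, slabDeriv τ v (slabDeriv τ v (g k)) p := by
    rw [slabDeriv_congr (fun q hq ↦ slabDeriv_sum
      (fun k ↦ (hg k).differentiableOn two_ne_zero) hq v) hp]
    exact slabDeriv_sum (fun k ↦ (contDiffOn_slabDeriv (m := 1) (hg k) (by norm_num)
      v).differentiableOn one_ne_zero) hp v
  simp only [waveOp, hsum, Finset.sum_sub_distrib]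
  rw [Finset.sum_comm]

lemma waveOp_clm (L : V →L[ℝ] W) (hg : ContDiffOn ℝ 2 g (slab τ)) (hp : p ∈ slab τ) :
    waveOp τ e (fun q ↦ L (g q)) p = L (waveOp τ e g p) := by
  have hclm (v : ℝ × E) : slabDeriv τ v (slabDeriv τ v fun q ↦ L (g q)) p
      = L (slabDeriv τ v (slabDeriv τ v g) p) := by
    rw [slabDeriv_congr (fun q hq ↦ slabDeriv_clm L (hg.differentiableOn two_ne_zero) hq v) hp]
    exact slabDeriv_clm L
      ((contDiffOn_slabDeriv (m := 1) hg (by norm_num) v).differentiableOn one_ne_zero) hp v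
  simp only [waveOp, hclm, map_sub, map_sum]

end WaveOperator

section Superposition

variable {E V X ι : Type*} [NormedAddCommGroup E] [NormedSpace ℝ E]
  [NormedAddCommGroup V] [NormedSpace ℝ V] [NormedAddCommGroup X] [NormedSpace ℝ X]
  [Fintype ι] {τ : ℝ} {e : ι → E} {K : Set X} {F : ℝ × E → X → V} {p : ℝ × E}

lemma contDiffOn_slabDeriv_left {m n : WithTop ℕ∞}
    (hF : ContDiffOn ℝ n (Function.uncurry F) (slab τ ×ˢ univ)) (hmn : m + 1 ≤ n) (v : ℝ × E) :
    ContDiffOn ℝ m (Function.uncurry fun q x ↦ slabDeriv τ v (F · x) q) (slab τ ×ˢ univ) :=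
  (contDiffOn_fderivWithin_left uniqueDiffOn_slab hF hmn).clm_apply contDiffOn_const

variable [MeasurableSpace X] [BorelSpace X] {μ : Measure X} [IsFiniteMeasureOnCompacts μ]

lemma slabDeriv_integral (hK : IsCompact K)
    (hF : ContDiffOn ℝ 1 (Function.uncurry F) (slab τ ×ˢ univ))
    (h0 : ∀ q ∈ slab τ, ∀ x ∉ K, F q x = 0) (hp : p ∈ slab τ) (v : ℝ × E) :
    slabDeriv τ v (fun q ↦ ∫ x, F q x ∂μ) p = ∫ x, slabDeriv τ v (F · x) p ∂μ :=
  fderivWithin_integral_apply convex_slab uniqueDiffOn_slab hK hF h0 hp v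

lemma waveOp_integral (hK : IsCompact K)
    (hF : ContDiffOn ℝ 2 (Function.uncurry F) (slab τ ×ˢ univ))
    (h0 : ∀ q ∈ slab τ, ∀ x ∉ K, F q x = 0) (hp : p ∈ slab τ) :
    waveOp τ e (fun q ↦ ∫ x, F q x ∂μ) p = ∫ x, waveOp τ e (F · x) p ∂μ := by
  have hF' (v : ℝ × E) := contDiffOn_slabDeriv_left (m := 1) hF (by norm_num) v
  have h0' (v : ℝ × E) : ∀ q ∈ slab τ, ∀ x ∉ K, slabDeriv τ v (F · x) q = 0 := fun q hq x hx ↦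
    slabDeriv_eq_zero_of_eqOn (fun q hq ↦ h0 q hq x hx) hq v
  have hsnd (v : ℝ × E) : slabDeriv τ v (slabDeriv τ v fun q ↦ ∫ x, F q x ∂μ) p
      = ∫ x, slabDeriv τ v (slabDeriv τ v (F · x)) p ∂μ := by
    rw [slabDeriv_congr (fun q hq ↦
      slabDeriv_integral hK (hF.of_le one_le_two) h0 hq v) hp]
    exact slabDeriv_integral hK (hF' v) (h0' v) hp v
  have hint (v : ℝ × E) : Integrable (fun x ↦ slabDeriv τ v (slabDeriv τ v (F · x)) p) μ := by
    have hcont := (contDiffOn_slabDeriv_left (m := 0) (hF' v) (by norm_num) v).continuousOn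
    exact (continuousOn_univ.1 (hcont.uncurry_left p hp)).integrable_of_hasCompactSupport
      (.intro hK fun x hx ↦ slabDeriv_eq_zero_of_eqOn (fun q hq ↦ h0' v q hq x hx) hp v)
  simp only [waveOp, hsnd]
  rw [integral_sub (hint _) (integrable_finsetSum _ fun i _ ↦ hint _),
    integral_finsetSum _ fun i _ ↦ hint _]

end Superposition

section Energy

variable {E ι : Type*} [NormedAddCommGroup E] [NormedSpace ℝ E] [Fintype ι]
  {τ t : ℝ} {e : ι → E} {K : Set E} {w χ g : ℝ × E → ℝ} {p : ℝ × E}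

/-- The energy density `(∂ₜw)² + ∑ᵢ (∂_{eᵢ}w)²` of a wave `w`. -/
def energyDensity (τ : ℝ) (e : ι → E) (w : ℝ × E → ℝ) (p : ℝ × E) : ℝ :=
  slabDeriv τ (1, 0) w p ^ 2 + ∑ i, slabDeriv τ (0, e i) w p ^ 2

lemma energyDensity_nonneg : 0 ≤ energyDensity τ e w p := by
  unfold energyDensity
  positivity

lemma contDiffOn_energyDensity (hw : ContDiffOn ℝ 2 w (slab τ)) :
    ContDiffOn ℝ 1 (energyDensity τ e w) (slab τ) := by
  have hw' (v : ℝ × E) := contDiffOn_slabDeriv (m := 1) hw (by norm_num) v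
  exact ((hw' _).pow 2).add (.sum fun i _ ↦ (hw' _).pow 2)

lemma energyDensity_eq_zero_of_initial (ht : t ∈ Ico 0 τ) (hw : DifferentiableOn ℝ w (slab τ))
    (hw0 : ∀ x, w (t, x) = 0) (hwt0 : ∀ x, slabDeriv τ (1, 0) w (t, x) = 0) (x : E) :
    energyDensity τ e w (t, x) = 0 := by
  simp [energyDensity, hwt0, slabDeriv_space_eq_zero hw ht hw0]

/-- A nonnegative weight supported over `K` whose space-time gradient is causal and past-directed.
Energies with such a weight do not increase along solutions of the wave equation. -/
structure IsCausalWeight (τ : ℝ) (e : ι → E) (K : Set E) (χ : ℝ × E → ℝ) : Prop where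
  contDiffOn : ContDiffOn ℝ 1 χ (slab τ)
  nonneg : ∀ p ∈ slab τ, 0 ≤ χ p
  eq_zero : ∀ t ∈ Ico 0 τ, ∀ x ∉ K, χ (t, x) = 0
  deriv_time_nonpos : ∀ p ∈ slab τ, slabDeriv τ (1, 0) χ p ≤ 0
  sum_sq_deriv_space_le :
    ∀ p ∈ slab τ, ∑ i, slabDeriv τ (0, e i) χ p ^ 2 ≤ slabDeriv τ (1, 0) χ p ^ 2

lemma mul_add_le_two_mul_sum {c a : ℝ} {b d : ι → ℝ} (hc : c ≤ 0) (hd : ∑ i, d i ^ 2 ≤ c ^ 2) :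
    c * (a ^ 2 + ∑ i, b i ^ 2) ≤ 2 * ∑ i, d i * (a * b i) := by
  set B := ∑ i, b i ^ 2
  set s := ∑ i, d i * b i
  have hB : 0 ≤ B := Finset.sum_nonneg fun i _ ↦ sq_nonneg (b i)
  have hs : s ^ 2 ≤ c ^ 2 * B := (Finset.sum_mul_sq_le_sq_mul_sq _ d b).trans (by gcongr)
  have hsum : ∑ i, d i * (a * b i) = a * s := by
    simp only [s, Finset.mul_sum, mul_left_comm]
  rw [hsum]
  rcases hc.eq_or_lt with rfl | hc
  · have : s = 0 := by nlinarith
    simp [this]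
  · nlinarith [sq_nonneg (c * a - s), hB]

lemma slabDeriv_sq (hg : DifferentiableOn ℝ g (slab τ)) (hp : p ∈ slab τ) (v : ℝ × E) :
    slabDeriv τ v (fun q ↦ g q ^ 2) p = 2 * (g p * slabDeriv τ v g p) := by
  simp only [sq]
  rw [slabDeriv_mul hg hg hp]
  ring

lemma slabDeriv_energyDensity (hw : ContDiffOn ℝ 2 w (slab τ)) (hp : p ∈ slab τ) (v : ℝ × E) :
    slabDeriv τ v (energyDensity τ e w) p =
      2 * (slabDeriv τ (1, 0) w p * slabDeriv τ v (slabDeriv τ (1, 0) w) p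
        + ∑ i, slabDeriv τ (0, e i) w p * slabDeriv τ v (slabDeriv τ (0, e i) w) p) := by
  have hw' (v : ℝ × E) := contDiffOn_slabDeriv (m := 1) hw (by norm_num) v
  have hsq (v : ℝ × E) := ((hw' v).pow 2).differentiableOn one_ne_zero
  rw [show energyDensity τ e w = fun q ↦ slabDeriv τ (1, 0) w q ^ 2
      + ∑ i, slabDeriv τ (0, e i) w q ^ 2 from rfl,
    slabDeriv_add (hsq _) (.fun_sum fun i _ ↦ hsq _) hp, slabDeriv_sum (fun _ ↦ hsq _) hp,
    slabDeriv_sq ((hw' _).differentiableOn one_ne_zero) hp, mul_add, Finset.mul_sum]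
  simp only [slabDeriv_sq ((hw' _).differentiableOn one_ne_zero) hp]

-- The right-hand side is the divergence of the weighted Poynting flux.
lemma slabDeriv_mul_energyDensity_le (hw : ContDiffOn ℝ 2 w (slab τ))
    (hwave : waveOp τ e w p = 0) (hχ : IsCausalWeight τ e K χ) (hp : p ∈ slab τ) :
    slabDeriv τ (1, 0) (fun q ↦ χ q * energyDensity τ e w q) p ≤
      ∑ i, 2 * slabDeriv τ (0, e i)
        (fun q ↦ χ q * (slabDeriv τ (1, 0) w q * slabDeriv τ (0, e i) w q)) p := by
  have hχ' := hχ.contDiffOn.differentiableOn one_ne_zero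
  have hw' (v : ℝ × E) :=
    (contDiffOn_slabDeriv (m := 1) hw (by norm_num) v).differentiableOn one_ne_zero
  have hflux (i : ι) : slabDeriv τ (0, e i)
      (fun q ↦ χ q * (slabDeriv τ (1, 0) w q * slabDeriv τ (0, e i) w q)) p =
        χ p * (slabDeriv τ (1, 0) w p * slabDeriv τ (0, e i) (slabDeriv τ (0, e i) w) p
          + slabDeriv τ (0, e i) w p * slabDeriv τ (1, 0) (slabDeriv τ (0, e i) w) p)
        + slabDeriv τ (0, e i) χ p * (slabDeriv τ (1, 0) w p * slabDeriv τ (0, e i) w p) := by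
    rw [slabDeriv_mul hχ' ((hw' _).fun_mul (hw' _)) hp, slabDeriv_mul (hw' _) (hw' _) hp,
      slabDeriv_comm hw hp (0, e i) (1, 0)]
    ring
  have henergy : slabDeriv τ (1, 0) (energyDensity τ e w) p = 2 * ∑ i,
      (slabDeriv τ (1, 0) w p * slabDeriv τ (0, e i) (slabDeriv τ (0, e i) w) p
        + slabDeriv τ (0, e i) w p * slabDeriv τ (1, 0) (slabDeriv τ (0, e i) w) p) := by
    rw [slabDeriv_energyDensity hw hp, sub_eq_zero.1 hwave, Finset.mul_sum,
      Finset.sum_add_distrib]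
  rw [slabDeriv_mul hχ' ((contDiffOn_energyDensity hw).differentiableOn one_ne_zero) hp, henergy,
    ← Finset.mul_sum]
  simp only [hflux, Finset.sum_add_distrib (f := fun i ↦ χ p * _), ← Finset.mul_sum]
  have hχw : slabDeriv τ (1, 0) χ p * energyDensity τ e w p ≤ 2 * ∑ i,
      slabDeriv τ (0, e i) χ p * (slabDeriv τ (1, 0) w p * slabDeriv τ (0, e i) w p) :=
    mul_add_le_two_mul_sum (hχ.deriv_time_nonpos p hp) (hχ.sum_sq_deriv_space_le p hp)
  linarith

end Energy

section EnergyEstimate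

variable {E ι : Type*} [NormedAddCommGroup E] [NormedSpace ℝ E] [Fintype ι]
  [MeasurableSpace E] [BorelSpace E] {μ : Measure E}
  {τ t : ℝ} {e : ι → E} {K : Set E} {w χ g : ℝ × E → ℝ}

lemma integrable_slabDeriv_slice [IsFiniteMeasureOnCompacts μ] (hK : IsCompact K)
    (hg : ContDiffOn ℝ 1 g (slab τ)) (h0 : ∀ t ∈ Ico 0 τ, ∀ x ∉ K, g (t, x) = 0)
    (ht : t ∈ Ico 0 τ) (v : ℝ × E) : Integrable (fun x ↦ slabDeriv τ v g (t, x)) μ :=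
  (continuous_slice (continuousOn_slabDeriv hg v) ht).integrable_of_hasCompactSupport
    (.intro hK (slabDeriv_eq_zero_off hK.isClosed h0 v t ht))

lemma hasDerivWithinAt_integral_slice [IsFiniteMeasureOnCompacts μ] (hK : IsCompact K)
    (hg : ContDiffOn ℝ 1 g (slab τ)) (h0 : ∀ t ∈ Ico 0 τ, ∀ x ∉ K, g (t, x) = 0)
    (ht : t ∈ Ico 0 τ) :
    HasDerivWithinAt (fun s ↦ ∫ x, g (s, x) ∂μ) (∫ x, slabDeriv τ (1, 0) g (t, x) ∂μ)
      (Ico 0 τ) t := by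
  have hint := (hasFDerivWithinAt_integral_of_contDiffOn (μ := μ) (F := fun s x ↦ g (s, x))
    (convex_Ico 0 τ) (uniqueDiffOn_Ico 0 τ) hK hg h0 ht).differentiableWithinAt.hasDerivWithinAt
  rw [← fderivWithin_derivWithin, fderivWithin_integral_apply (F := fun s x ↦ g (s, x))
    (convex_Ico 0 τ) (uniqueDiffOn_Ico 0 τ) hK hg h0 ht] at hint
  simpa only [fderivWithin_derivWithin, (hasDerivWithinAt_slice (hg.differentiableOn one_ne_zero)
    ht _).derivWithin (uniqueDiffOn_Ico 0 τ t ht)] using hint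

variable [FiniteDimensional ℝ E] [μ.IsAddHaarMeasure]

lemma integral_fderiv_apply_eq_zero {g : E → ℝ} (hg : ContDiff ℝ 1 g) (hc : HasCompactSupport g)
    (v : E) : ∫ x, fderiv ℝ g x v ∂μ = 0 := by
  have hint : Integrable (fun x ↦ fderiv ℝ g x v) μ :=
    ((hg.continuous_fderiv one_ne_zero).clm_apply
      continuous_const).integrable_of_hasCompactSupport (hc.fderiv_apply ℝ v)
  simpa using integral_mul_fderiv_eq_neg_fderiv_mul_of_integrable (μ := μ) (f := fun _ ↦ (1 : ℝ))
    (g := g) (v := v) (by simp) (by simpa using hint)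
    (by simpa using hg.continuous.integrable_of_hasCompactSupport hc) (by simp)
    fun x _ ↦ hg.differentiable one_ne_zero x

lemma integral_slabDeriv_space_eq_zero (hK : IsCompact K)
    (hg : ContDiffOn ℝ 1 g (slab τ)) (h0 : ∀ t ∈ Ico 0 τ, ∀ x ∉ K, g (t, x) = 0)
    (ht : t ∈ Ico 0 τ) (v : E) : ∫ x, slabDeriv τ (0, v) g (t, x) ∂μ = 0 := by
  simp only [← fderiv_slice (hg.differentiableOn one_ne_zero) ht]
  exact integral_fderiv_apply_eq_zero (contDiff_slice hg ht) (.intro hK (h0 t ht)) v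

lemma antitoneOn_integral_energyDensity (hw : ContDiffOn ℝ 2 w (slab τ))
    (hwave : ∀ p ∈ slab τ, waveOp τ e w p = 0) (hK : IsCompact K) (hχ : IsCausalWeight τ e K χ) :
    AntitoneOn (fun t ↦ ∫ x, χ (t, x) * energyDensity τ e w (t, x) ∂μ) (Ico 0 τ) := by
  set g : ℝ × E → ℝ := fun p ↦ χ p * energyDensity τ e w p
  set flux : ι → ℝ × E → ℝ := fun i p ↦ χ p * (slabDeriv τ (1, 0) w p * slabDeriv τ (0, e i) w p)
  have hw' (v : ℝ × E) := contDiffOn_slabDeriv (m := 1) hw (by norm_num) v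
  have hg : ContDiffOn ℝ 1 g (slab τ) := hχ.contDiffOn.mul (contDiffOn_energyDensity hw)
  have hg0 : ∀ t ∈ Ico 0 τ, ∀ x ∉ K, g (t, x) = 0 := fun t ht x hx ↦ by
    simp [g, hχ.eq_zero t ht x hx]
  have hflux (i : ι) : ContDiffOn ℝ 1 (flux i) (slab τ) :=
    hχ.contDiffOn.mul ((hw' _).mul (hw' _))
  have hflux0 (i : ι) : ∀ t ∈ Ico 0 τ, ∀ x ∉ K, flux i (t, x) = 0 := fun t ht x hx ↦ by
    simp [flux, hχ.eq_zero t ht x hx]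
  have hint : ∀ t ∈ Ico 0 τ, ∀ i, Integrable (fun x ↦ 2 * slabDeriv τ (0, e i) (flux i) (t, x)) μ :=
    fun t ht i ↦ (integrable_slabDeriv_slice hK (hflux i) (hflux0 i) ht _).const_mul 2
  refine antitoneOn_of_hasDerivWithinAt_nonpos (convex_Ico 0 τ)
    (fun t ht ↦ (hasDerivWithinAt_integral_slice hK hg hg0 ht).continuousWithinAt)
    (fun t ht ↦ (hasDerivWithinAt_integral_slice hK hg hg0 (interior_subset ht)).mono
      interior_subset) fun t ht ↦ ?_
  replace ht := interior_subset ht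
  calc ∫ x, slabDeriv τ (1, 0) g (t, x) ∂μ
      ≤ ∫ x, ∑ i, 2 * slabDeriv τ (0, e i) (flux i) (t, x) ∂μ :=
        integral_mono (integrable_slabDeriv_slice hK hg hg0 ht _)
          (integrable_finsetSum _ fun i _ ↦ hint t ht i)
          fun x ↦ slabDeriv_mul_energyDensity_le hw (hwave _ (mem_slab ht x)) hχ (mem_slab ht x)
    _ = 0 := by
        simp only [integral_finsetSum _ fun i _ ↦ hint t ht i, integral_const_mul,
          integral_slabDeriv_space_eq_zero hK (hflux _) (hflux0 _) ht, mul_zero,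
          Finset.sum_const_zero]

end EnergyEstimate

section WaveUniqueness

variable {E ι : Type*} [NormedAddCommGroup E] [NormedSpace ℝ E] [FiniteDimensional ℝ E] [Fintype ι]
  {τ : ℝ} {e : ι → E} {K : Set E} {w χ : ℝ × E → ℝ} {p : ℝ × E}

lemma mul_energyDensity_eq_zero (hw : ContDiffOn ℝ 2 w (slab τ))
    (hwave : ∀ p ∈ slab τ, waveOp τ e w p = 0) (hw0 : ∀ x, w (0, x) = 0)
    (hwt0 : ∀ x, slabDeriv τ (1, 0) w (0, x) = 0) (hK : IsCompact K)
    (hχ : IsCausalWeight τ e K χ) (hp : p ∈ slab τ) : χ p * energyDensity τ e w p = 0 := by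
  borelize E
  obtain ⟨t, x⟩ := p
  have ht : t ∈ Ico 0 τ := hp.1
  have h0 : (0 : ℝ) ∈ Ico 0 τ := ⟨le_rfl, ht.1.trans_lt ht.2⟩
  have hle := antitoneOn_integral_energyDensity (μ := Measure.addHaar) hw hwave hK hχ h0 ht ht.1
  simp only [energyDensity_eq_zero_of_initial h0 (hw.differentiableOn two_ne_zero) hw0 hwt0,
    mul_zero, integral_zero] at hle
  by_contra hne
  refine hle.not_gt (Continuous.integral_pos_of_hasCompactSupport_nonneg_nonzero (x := x)
    (continuous_slice (hχ.contDiffOn.mul (contDiffOn_energyDensity hw)).continuousOn ht)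
    (.intro hK fun y hy ↦ ?_) (fun y ↦ ?_) hne)
  · simp [hχ.eq_zero t ht y hy]
  · exact mul_nonneg (hχ.nonneg _ (mem_slab ht y)) energyDensity_nonneg

end WaveUniqueness

section LightCone

variable {E ι : Type*} [NormedAddCommGroup E] [InnerProductSpace ℝ E] [Fintype ι]
  {τ R : ℝ} {e : ι → E} {w : ℝ × E → ℝ} {p : ℝ × E}

/-- A smooth weight which is positive inside the backward light cone with vertex `(R, 0)` and
vanishes outside it. -/
def coneWeight (R : ℝ) (p : ℝ × E) : ℝ := expNegInvGlue ((R - p.1) ^ 2 - ‖p.2‖ ^ 2)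

lemma hasFDerivAt_coneWeight : HasFDerivAt (coneWeight R)
    (deriv expNegInvGlue ((R - p.1) ^ 2 - ‖p.2‖ ^ 2) •
      ((-2 * (R - p.1)) • ContinuousLinearMap.fst ℝ ℝ E
        - 2 • (innerSL ℝ p.2).comp (ContinuousLinearMap.snd ℝ ℝ E))) p := by
  have htime : HasFDerivAt (fun q : ℝ × E ↦ (R - q.1) ^ 2)
      ((-2 * (R - p.1)) • ContinuousLinearMap.fst ℝ ℝ E) p := by
    convert! ((hasFDerivAt_fst (𝕜 := ℝ) (p := p)).const_sub R).pow 2 using 1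
    ext <;> simp
  have hspace : HasFDerivAt (fun q : ℝ × E ↦ ‖q.2‖ ^ 2)
      (2 • (innerSL ℝ p.2).comp (ContinuousLinearMap.snd ℝ ℝ E)) p := hasFDerivAt_snd.norm_sq
  exact ((expNegInvGlue.contDiff (n := 1)).differentiable one_ne_zero
    _).hasDerivAt.comp_hasFDerivAt p (htime.sub hspace)

lemma slabDeriv_coneWeight_time (hp : p ∈ slab τ) :
    slabDeriv τ (1, 0) (coneWeight R) p
      = -2 * (deriv expNegInvGlue ((R - p.1) ^ 2 - ‖p.2‖ ^ 2) * (R - p.1)) := by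
  rw [slabDeriv_eq_of_hasFDerivWithinAt hasFDerivAt_coneWeight.hasFDerivWithinAt hp]
  simp only [smul_apply, sub_apply, ContinuousLinearMap.coe_fst', ContinuousLinearMap.comp_apply,
    ContinuousLinearMap.coe_snd', coe_innerSL_apply, inner_zero_right, nsmul_zero, smul_eq_mul]
  ring

lemma slabDeriv_coneWeight_space (hp : p ∈ slab τ) (v : E) :
    slabDeriv τ (0, v) (coneWeight R) p
      = -2 * (deriv expNegInvGlue ((R - p.1) ^ 2 - ‖p.2‖ ^ 2) * ⟪p.2, v⟫) := by
  rw [slabDeriv_eq_of_hasFDerivWithinAt hasFDerivAt_coneWeight.hasFDerivWithinAt hp]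
  simp only [smul_apply, sub_apply, ContinuousLinearMap.coe_fst', ContinuousLinearMap.comp_apply,
    ContinuousLinearMap.coe_snd', coe_innerSL_apply, nsmul_eq_mul, Nat.cast_ofNat, smul_eq_mul]
  ring

lemma deriv_expNegInvGlue_of_nonpos {x : ℝ} (hx : x ≤ 0) : deriv expNegInvGlue x = 0 :=
  IsLocalMin.deriv_eq_zero (.of_forall fun y ↦ by
    simpa [expNegInvGlue.zero_of_nonpos hx] using expNegInvGlue.nonneg y)

lemma isCausalWeight_coneWeight (he : Orthonormal ℝ e) (hR : τ ≤ R) :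
    IsCausalWeight τ e (closedBall 0 R) (coneWeight R) where
  contDiffOn := (expNegInvGlue.contDiff.comp (((contDiff_const.sub contDiff_fst).pow 2).sub
    (contDiff_snd.norm_sq ℝ))).contDiffOn
  nonneg _ _ := expNegInvGlue.nonneg _
  eq_zero t ht x hx := by
    have hx : R < ‖x‖ := by simpa using hx
    refine expNegInvGlue.zero_of_nonpos ?_
    have : (R - t) ^ 2 ≤ ‖x‖ ^ 2 := by
      gcongr <;> linarith [ht.1, ht.2]
    linarith
  deriv_time_nonpos p hp := by
    have hp1 : 0 ≤ R - p.1 := by linarith [hp.1.2]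
    have hpos : 0 ≤ deriv expNegInvGlue ((R - p.1) ^ 2 - ‖p.2‖ ^ 2) :=
      expNegInvGlue.monotone.deriv_nonneg
    rw [slabDeriv_coneWeight_time hp]
    linarith [mul_nonneg hpos hp1]
  sum_sq_deriv_space_le p hp := by
    simp only [slabDeriv_coneWeight_time hp, slabDeriv_coneWeight_space hp, mul_pow,
      ← Finset.mul_sum]
    rcases le_total ((R - p.1) ^ 2 - ‖p.2‖ ^ 2) 0 with hneg | hpos
    · simp [deriv_expNegInvGlue_of_nonpos hneg]
    · have hbessel : ∑ i, ⟪p.2, e i⟫ ^ 2 ≤ ‖p.2‖ ^ 2 := by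
        simpa [real_inner_comm] using he.sum_inner_products_le (s := Finset.univ) (x := p.2)
      gcongr
      linarith

variable [FiniteDimensional ℝ E]

theorem eqOn_zero_of_waveOp_eq_zero (he : Orthonormal ℝ e) (hw : ContDiffOn ℝ 2 w (slab τ))
    (hwave : ∀ p ∈ slab τ, waveOp τ e w p = 0) (hw0 : ∀ x, w (0, x) = 0)
    (hwt0 : ∀ x, slabDeriv τ (1, 0) w (0, x) = 0) : EqOn w 0 (slab τ) := by
  have hwt : ∀ p ∈ slab τ, slabDeriv τ (1, 0) w p = 0 := by
    rintro ⟨t, x⟩ hp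
    have hR : (0 : ℝ) < (τ + ‖x‖ - t) ^ 2 - ‖x‖ ^ 2 := by
      nlinarith [norm_nonneg x, hp.1.2]
    have hzero := mul_energyDensity_eq_zero hw hwave hw0 hwt0 (isCompact_closedBall 0 (τ + ‖x‖))
      (isCausalWeight_coneWeight he (le_add_of_nonneg_right (norm_nonneg x))) hp
    have henergy := (mul_eq_zero.1 hzero).resolve_left (expNegInvGlue.pos_of_pos hR).ne'
    rw [energyDensity, add_eq_zero_iff_of_nonneg (sq_nonneg _)
      (Finset.sum_nonneg fun i _ ↦ sq_nonneg _)] at henergy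
    exact sq_eq_zero_iff.1 henergy.1
  rintro ⟨t, x⟩ ⟨ht, -⟩
  have hslice := fun s hs ↦ hasDerivWithinAt_slice (hw.differentiableOn two_ne_zero) (t := s) hs x
  refine ((convex_Ico 0 τ).is_const_of_fderivWithin_eq_zero
    (fun s hs ↦ (hslice s hs).differentiableWithinAt) (fun s hs ↦ ?_) ht
    ⟨le_rfl, ht.1.trans_lt ht.2⟩).trans (hw0 x)
  rw [(hslice s hs).hasFDerivWithinAt.fderivWithin (uniqueDiffOn_Ico 0 τ s hs),
    hwt _ (mem_slab hs x), ContinuousLinearMap.toSpanSingleton_zero]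

end LightCone

section Mollification

variable {E V : Type*} [NormedAddCommGroup E] [NormedAddCommGroup V] [NormedSpace ℝ V]
  {τ : ℝ} {η : E → ℝ} {h k : ℝ × E → V} {p : ℝ × E}

lemma sub_mem_slab (hp : p ∈ slab τ) (y : E) : p - (0, y) ∈ slab τ := by
  simpa [slab] using hp

lemma smul_comp_sub_eq_zero (q : ℝ × E) : ∀ y ∉ tsupport η, η y • h (q - (0, y)) = 0 :=
  fun y hy ↦ by rw [image_eq_zero_of_notMem_tsupport hy, zero_smul]

variable [MeasurableSpace E] {μ : Measure E}

/-- The convolution `η ⋆ h` in the space variable only, regularizing a space-time function `h`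
without leaving the slab. -/
def mollify (μ : Measure E) (η : E → ℝ) (h : ℝ × E → V) (p : ℝ × E) : V :=
  ∫ y, η y • h (p - (0, y)) ∂μ

lemma mollify_congr (hhk : EqOn h k (slab τ)) (hp : p ∈ slab τ) :
    mollify μ η h p = mollify μ η k p := by
  simp only [mollify, hhk (sub_mem_slab hp _)]

lemma mollify_eq_zero {t : ℝ} (hh : ∀ x, h (t, x) = 0) (x : E) : mollify μ η h (t, x) = 0 := by
  simp [mollify, hh]

lemma integrable_smul_comp_sub [BorelSpace E] [IsFiniteMeasureOnCompacts μ] (hη : Continuous η)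
    (hηc : HasCompactSupport η) (hh : ContinuousOn h (slab τ)) (hp : p ∈ slab τ) :
    Integrable (fun y ↦ η y • h (p - (0, y))) μ :=
  (hη.smul (hh.comp_continuous (by fun_prop)
    fun y ↦ sub_mem_slab hp y)).integrable_of_hasCompactSupport hηc.smul_right

lemma mollify_sum [BorelSpace E] [IsFiniteMeasureOnCompacts μ] {κ : Type*} [Fintype κ]
    {h : κ → ℝ × E → V} (hη : Continuous η) (hηc : HasCompactSupport η)
    (hh : ∀ k, ContinuousOn (h k) (slab τ)) (hp : p ∈ slab τ) :
    mollify μ η (fun q ↦ ∑ k, h k q) p = ∑ k, mollify μ η (h k) p := by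
  simp only [mollify, Finset.smul_sum]
  exact integral_finsetSum _ fun k _ ↦ integrable_smul_comp_sub hη hηc (hh k) hp

end Mollification

section MollificationCalculus

variable {E V ι : Type*} [NormedAddCommGroup E] [NormedSpace ℝ E]
  [NormedAddCommGroup V] [NormedSpace ℝ V] [Fintype ι]
  {τ : ℝ} {e : ι → E} {η : E → ℝ} {h : ℝ × E → V} {p : ℝ × E}

lemma contDiffOn_smul_comp_sub {n : WithTop ℕ∞} (hη : ContDiff ℝ n η)
    (hh : ContDiffOn ℝ n h (slab τ)) :
    ContDiffOn ℝ n (Function.uncurry fun p y ↦ η y • h (p - (0, y))) (slab τ ×ˢ univ) :=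
  (hη.comp contDiff_snd).contDiffOn.smul
    (hh.comp (f := fun q : (ℝ × E) × E ↦ q.1 - (0, q.2)) (by fun_prop)
      fun q hq ↦ sub_mem_slab hq.1 q.2)

lemma slabDeriv_smul_comp_sub (hh : DifferentiableOn ℝ h (slab τ)) (hp : p ∈ slab τ) (c : ℝ)
    (y : E) (v : ℝ × E) :
    slabDeriv τ v (fun q ↦ c • h (q - (0, y))) p = c • slabDeriv τ v h (p - (0, y)) :=
  slabDeriv_eq_of_hasFDerivWithinAt (((hh _ (sub_mem_slab hp y)).hasFDerivWithinAt.comp p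
    ((hasFDerivWithinAt_id p (slab τ)).sub_const (0, y)) fun _ hq ↦ sub_mem_slab hq y).const_smul c)
    hp v

lemma waveOp_smul_comp_sub (hh : ContDiffOn ℝ 2 h (slab τ)) (hp : p ∈ slab τ) (c : ℝ) (y : E) :
    waveOp τ e (fun q ↦ c • h (q - (0, y))) p = c • waveOp τ e h (p - (0, y)) := by
  have hsnd (v : ℝ × E) : slabDeriv τ v (slabDeriv τ v fun q ↦ c • h (q - (0, y))) p
      = c • slabDeriv τ v (slabDeriv τ v h) (p - (0, y)) := by
    rw [slabDeriv_congr (fun q hq ↦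
      slabDeriv_smul_comp_sub (hh.differentiableOn two_ne_zero) hq c y v) hp]
    exact slabDeriv_smul_comp_sub
      ((contDiffOn_slabDeriv (m := 1) hh (by norm_num) v).differentiableOn one_ne_zero) hp c y v
  simp only [waveOp, hsnd, smul_sub, Finset.smul_sum]

variable [MeasurableSpace E] [BorelSpace E] {μ : Measure E}

section FiniteOnCompacts

variable [IsFiniteMeasureOnCompacts μ]

lemma contDiffOn_mollify [FiniteDimensional ℝ E] {n : ℕ} (hη : ContDiff ℝ n η)
    (hηc : HasCompactSupport η) (hh : ContDiffOn ℝ n h (slab τ)) :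
    ContDiffOn ℝ n (mollify μ η h) (slab τ) :=
  contDiffOn_integral convex_slab uniqueDiffOn_slab hηc (contDiffOn_smul_comp_sub hη hh)
    fun q _ ↦ smul_comp_sub_eq_zero q

lemma slabDeriv_mollify (hη : ContDiff ℝ 1 η) (hηc : HasCompactSupport η)
    (hh : ContDiffOn ℝ 1 h (slab τ)) (hp : p ∈ slab τ) (v : ℝ × E) :
    slabDeriv τ v (mollify μ η h) p = mollify μ η (slabDeriv τ v h) p := by
  refine (slabDeriv_integral hηc (contDiffOn_smul_comp_sub hη hh)
    (fun q _ ↦ smul_comp_sub_eq_zero q) hp v).trans ?_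
  simp only [slabDeriv_smul_comp_sub (hh.differentiableOn one_ne_zero) hp, mollify]

lemma waveOp_mollify (hη : ContDiff ℝ 2 η) (hηc : HasCompactSupport η)
    (hh : ContDiffOn ℝ 2 h (slab τ)) (hp : p ∈ slab τ) :
    waveOp τ e (mollify μ η h) p = mollify μ η (waveOp τ e h) p := by
  refine (waveOp_integral hηc (contDiffOn_smul_comp_sub hη hh)
    (fun q _ ↦ smul_comp_sub_eq_zero q) hp).trans ?_
  simp only [waveOp_smul_comp_sub hh hp, mollify]

end FiniteOnCompacts

variable [FiniteDimensional ℝ E] [μ.IsAddHaarMeasure]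

lemma slabDeriv_space_mollify (hη : ContDiff ℝ 1 η) (hηc : HasCompactSupport η)
    (hh : ContDiffOn ℝ 1 h (slab τ)) (hp : p ∈ slab τ) (w : E) :
    slabDeriv τ (0, w) (mollify μ η h) p = mollify μ (fun y ↦ fderiv ℝ η y w) h p := by
  obtain ⟨t, x⟩ := p
  have hk : Differentiable ℝ fun y ↦ h (t, y) := (contDiff_slice hh hp.1).differentiable one_ne_zero
  have hk' (y : E) : HasFDerivAt (fun y ↦ h (t, x - y))
      (-fderiv ℝ (fun y ↦ h (t, y)) (x - y)) y := by
    simpa using! (hk (x - y)).hasFDerivAt.comp y ((hasFDerivAt_id y).const_sub x)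
  have hderiv (y : E) : fderiv ℝ (fun y ↦ h (t, x - y)) y w = -slabDeriv τ (0, w) h (t, x - y) := by
    rw [(hk' y).fderiv, neg_apply, fderiv_slice (hh.differentiableOn one_ne_zero) hp.1]
  have hη' : Continuous fun y ↦ fderiv ℝ η y w :=
    (hη.continuous_fderiv one_ne_zero).clm_apply continuous_const
  rw [slabDeriv_mollify hη hηc hh hp]
  have hparts := integral_smul_fderiv_eq_neg_fderiv_smul_of_integrable (μ := μ) (v := w)
    (f := η) (g := fun y ↦ h (t, x - y))
    (by simpa using integrable_smul_comp_sub hη' (hηc.fderiv_apply ℝ w) hh.continuousOn hp)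
    (by simpa [hderiv] using
      (integrable_smul_comp_sub hη.continuous hηc (continuousOn_slabDeriv hh (0, w)) hp).neg)
    (by simpa using integrable_smul_comp_sub hη.continuous hηc hh.continuousOn hp)
    (fun y _ ↦ hη.differentiable one_ne_zero y) fun y _ ↦ (hk' y).differentiableAt
  simpa [hderiv, mollify, integral_neg] using hparts

lemma contDiffOn_slabDeriv_space_mollify {n : ℕ} (hn : 1 ≤ n) (hη : ContDiff ℝ (n + 1) η)
    (hηc : HasCompactSupport η) (hh : ContDiffOn ℝ n h (slab τ)) (w : E) :
    ContDiffOn ℝ n (slabDeriv τ (0, w) (mollify μ η h)) (slab τ) :=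
  (contDiffOn_mollify ((hη.fderiv_right le_rfl).clm_apply contDiff_const) (hηc.fderiv_apply ℝ w)
    hh).congr fun _ hp ↦ slabDeriv_space_mollify (hη.of_le (by simp)) hηc
      (hh.of_le (by exact_mod_cast hn)) hp w

end MollificationCalculus

section FourDivergence

variable {E V ι κ : Type*} [NormedAddCommGroup E] [NormedSpace ℝ E]
  [NormedAddCommGroup V] [NormedSpace ℝ V] [Fintype ι] [Fintype κ]
  {τ : ℝ} {e : ι → E} {g : ℝ × E → V} {p : ℝ × E} {A : κ → ℝ × E → ℝ} {v : κ → ℝ × E}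

lemma waveOp_slabDeriv (hg : ContDiffOn ℝ 2 g (slab τ))
    (hg' : ∀ v, ContDiffOn ℝ 2 (slabDeriv τ v g) (slab τ)) (hp : p ∈ slab τ) (v : ℝ × E) :
    waveOp τ e (slabDeriv τ v g) p = slabDeriv τ v (waveOp τ e g) p := by
  have hdiff (u : ℝ × E) : DifferentiableOn ℝ (slabDeriv τ u (slabDeriv τ u g)) (slab τ) :=
    (contDiffOn_slabDeriv (m := 1) (hg' u) (by norm_num) u).differentiableOn one_ne_zero
  have hcomm (u : ℝ × E) : slabDeriv τ u (slabDeriv τ u (slabDeriv τ v g)) p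
      = slabDeriv τ v (slabDeriv τ u (slabDeriv τ u g)) p := by
    rw [slabDeriv_congr (fun q hq ↦ slabDeriv_comm hg hq u v) hp, slabDeriv_comm (hg' u) hp]
  have hsub := slabDeriv_sub
    (h := fun q ↦ ∑ i, slabDeriv τ (0, e i) (slabDeriv τ (0, e i) g) q)
    (hdiff (1, 0)) (.fun_sum fun i _ ↦ hdiff (0, e i)) hp v
  rw [slabDeriv_sum (fun i ↦ hdiff (0, e i)) hp] at hsub
  simp only [waveOp, hcomm]
  exact hsub.symm

/-- The sum `∑ₖ ∂_{vₖ} Aₖ` of directional derivatives of the components of a four-potential. With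
`v` the coordinate directions of space-time it is the left-hand side of the Lorenz gauge
condition. -/
def fourDiv (τ : ℝ) (v : κ → ℝ × E) (A : κ → ℝ × E → ℝ) (p : ℝ × E) : ℝ :=
  ∑ k, slabDeriv τ (v k) (A k) p

lemma contDiffOn_fourDiv (hA : ∀ k, ContDiffOn ℝ 2 (A k) (slab τ)) :
    ContDiffOn ℝ 1 (fourDiv τ v A) (slab τ) :=
  .sum fun k _ ↦ contDiffOn_slabDeriv (hA k) (by norm_num) (v k)

variable [MeasurableSpace E] [BorelSpace E] {μ : Measure E} {η : E → ℝ}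

lemma mollify_fourDiv [IsFiniteMeasureOnCompacts μ] (hη : ContDiff ℝ 1 η)
    (hηc : HasCompactSupport η) (hA : ∀ k, ContDiffOn ℝ 1 (A k) (slab τ)) (hp : p ∈ slab τ) :
    mollify μ η (fourDiv τ v A) p = fourDiv τ v (fun k ↦ mollify μ η (A k)) p := by
  simp only [fourDiv, slabDeriv_mollify hη hηc (hA _) hp]
  exact mollify_sum hη.continuous hηc (fun k ↦ continuousOn_slabDeriv (hA k) (v k)) hp

variable [FiniteDimensional ℝ E] [μ.IsAddHaarMeasure]

lemma eqOn_zero_of_mollify_eq_zero {h : ℝ × E → ℝ} (hh : ContinuousOn h (slab τ))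
    (hzero : ∀ η : E → ℝ, ContDiff ℝ 3 η → HasCompactSupport η → EqOn (mollify μ η h) 0 (slab τ)) :
    EqOn h 0 (slab τ) := by
  rintro ⟨t, x⟩ hp
  have hcont : Continuous fun y ↦ h (t, x - y) :=
    (continuous_slice hh hp.1).comp (continuous_const.sub continuous_id)
  have hae : ∀ᵐ y ∂μ, h (t, x - y) = 0 :=
    ae_eq_zero_of_integral_contDiff_smul_eq_zero hcont.locallyIntegrable fun η hη hηc ↦ by
      simpa [mollify] using hzero η (hη.of_le ENat.LEInfty.out) hηc hp
  simpa using congrFun ((hcont.ae_eq_iff_eq μ continuous_const).1 hae) 0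

-- The wave equation trades the missing time derivatives for space derivatives, which fall on `η`.
lemma contDiffOn_slabDeriv_mollify (hη : ContDiff ℝ 3 η) (hηc : HasCompactSupport η)
    (hg : ContDiffOn ℝ 2 g (slab τ)) (hwave : ContDiffOn ℝ 1 (waveOp τ e g) (slab τ))
    (v : ℝ × E) : ContDiffOn ℝ 2 (slabDeriv τ v (mollify μ η g)) (slab τ) := by
  have hη2 : ContDiff ℝ 2 η := hη.of_le (by norm_num)
  have hη1 : ContDiff ℝ 1 η := hη.of_le (by norm_num)
  have hm : ContDiffOn ℝ 2 (mollify μ η g) (slab τ) := contDiffOn_mollify hη2 hηc hg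
  have hspace (w : E) : ContDiffOn ℝ 2 (slabDeriv τ (0, w) (mollify μ η g)) (slab τ) :=
    contDiffOn_slabDeriv_space_mollify one_le_two (by norm_num [hη]) hηc hg w
  have htime : ContDiffOn ℝ 2 (slabDeriv τ (1, 0) (mollify μ η g)) (slab τ) := by
    refine contDiffOn_two_of_slabDeriv
      ((contDiffOn_slabDeriv (m := 1) hm (by norm_num) _).differentiableOn one_ne_zero) ?_ fun w ↦
      (contDiffOn_slabDeriv (m := 1) (hspace w) (by norm_num) (1, 0)).congr
        fun p hp ↦ slabDeriv_comm hm hp _ _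
    refine ((contDiffOn_mollify (μ := μ) (n := 1) hη1 hηc hwave).add
      (.sum (s := Finset.univ) fun i _ ↦
        contDiffOn_slabDeriv (m := 1) (hspace (e i)) (by norm_num) (0, e i))).congr fun p hp ↦ ?_
    rw [← waveOp_mollify hη2 hηc hg hp, waveOp, sub_add_cancel]
  exact ((htime.const_smul v.1).add (hspace v.2)).congr fun p _ ↦ slabDeriv_eq_time_add_space v

lemma contDiffOn_fourDiv_mollify (hη : ContDiff ℝ 3 η) (hηc : HasCompactSupport η)
    (hA : ∀ k, ContDiffOn ℝ 2 (A k) (slab τ))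
    (hJ : ∀ k, ContDiffOn ℝ 1 (waveOp τ e (A k)) (slab τ)) :
    ContDiffOn ℝ 2 (fourDiv τ v fun k ↦ mollify μ η (A k)) (slab τ) :=
  .sum fun k _ ↦ contDiffOn_slabDeriv_mollify hη hηc (hA k) (hJ k) (v k)

lemma waveOp_fourDiv_mollify (hη : ContDiff ℝ 3 η) (hηc : HasCompactSupport η)
    (hA : ∀ k, ContDiffOn ℝ 2 (A k) (slab τ))
    (hJ : ∀ k, ContDiffOn ℝ 1 (waveOp τ e (A k)) (slab τ)) (hp : p ∈ slab τ) :
    waveOp τ e (fourDiv τ v fun k ↦ mollify μ η (A k)) p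
      = mollify μ η (fourDiv τ v fun k ↦ waveOp τ e (A k)) p := by
  have hη2 : ContDiff ℝ 2 η := hη.of_le (by norm_num)
  have hdiff (k : κ) (u : ℝ × E) : ContDiffOn ℝ 2 (slabDeriv τ u (mollify μ η (A k))) (slab τ) :=
    contDiffOn_slabDeriv_mollify hη hηc (hA k) (hJ k) u
  rw [mollify_fourDiv (hη.of_le (by norm_num)) hηc hJ hp]
  refine (waveOp_sum (fun k ↦ hdiff k (v k)) hp).trans (Finset.sum_congr rfl fun k _ ↦ ?_)
  rw [waveOp_slabDeriv (contDiffOn_mollify hη2 hηc (hA k)) (hdiff k) hp]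
  exact slabDeriv_congr (fun q hq ↦ waveOp_mollify hη2 hηc (hA k) hq) hp (v k)

end FourDivergence

section LorenzGauge

variable {E ι κ : Type*} [NormedAddCommGroup E] [InnerProductSpace ℝ E] [FiniteDimensional ℝ E]
  [Fintype ι] [Fintype κ] {τ : ℝ} {e : ι → E} {A : κ → ℝ × E → ℝ} {v : κ → ℝ × E}

-- The four-divergence is only `C¹`, so the uniqueness theorem is applied to its mollifications.
theorem eqOn_fourDiv_zero (he : Orthonormal ℝ e) (hA : ∀ k, ContDiffOn ℝ 2 (A k) (slab τ))
    (hJ : ∀ k, ContDiffOn ℝ 1 (waveOp τ e (A k)) (slab τ))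
    (hcons : EqOn (fourDiv τ v fun k ↦ waveOp τ e (A k)) 0 (slab τ))
    (h0 : ∀ x, fourDiv τ v A (0, x) = 0)
    (h0t : ∀ x, slabDeriv τ (1, 0) (fourDiv τ v A) (0, x) = 0) :
    EqOn (fourDiv τ v A) 0 (slab τ) := by
  borelize E
  refine eqOn_zero_of_mollify_eq_zero (μ := Measure.addHaar) (contDiffOn_fourDiv hA).continuousOn
    fun η hη hηc p hp ↦ ?_
  have hη1 : ContDiff ℝ 1 η := hη.of_le (by norm_num)
  have hinit (x : E) : (0, x) ∈ slab τ := mem_slab ⟨le_rfl, hp.1.1.trans_lt hp.1.2⟩ x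
  have hmollify : EqOn (fourDiv τ v fun k ↦ mollify Measure.addHaar η (A k))
      (mollify Measure.addHaar η (fourDiv τ v A)) (slab τ) :=
    fun q hq ↦ (mollify_fourDiv hη1 hηc (fun k ↦ (hA k).of_le one_le_two) hq).symm
  rw [← hmollify hp]
  refine eqOn_zero_of_waveOp_eq_zero he (contDiffOn_fourDiv_mollify hη hηc hA hJ)
    (fun q hq ↦ ?_) (fun x ↦ ?_) (fun x ↦ ?_) hp
  · rw [waveOp_fourDiv_mollify hη hηc hA hJ hq, mollify_congr hcons hq]
    exact mollify_eq_zero (fun _ ↦ rfl) q.2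
  · rw [hmollify (hinit x), mollify_eq_zero h0]
  · rw [slabDeriv_congr hmollify (hinit x),
      slabDeriv_mollify hη1 hηc (contDiffOn_fourDiv hA) (hinit x), mollify_eq_zero h0t]

end LorenzGauge

section SlabVectorCalculus

variable {τ t : ℝ} {φ : ℝ × E3 → ℝ} {F : ℝ × E3 → E3} {p : ℝ × E3}

/-- The spatial gradient of a space-time function, with derivatives relative to the slab. -/
def slabGrad (τ : ℝ) (φ : ℝ × E3 → ℝ) (p : ℝ × E3) : E3 :=
  WithLp.toLp 2 fun i ↦ slabDeriv τ (0, e3 i) φ p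

/-- The spatial divergence of a space-time vector field. -/
def slabDiv (τ : ℝ) (F : ℝ × E3 → E3) (p : ℝ × E3) : ℝ :=
  ∑ i, slabDeriv τ (0, e3 i) F p i

/-- The spatial curl of a space-time vector field; the indices `k + 1` and `k + 2` are those of
`Fin 3`, hence cyclic. -/
def slabCurl (τ : ℝ) (F : ℝ × E3 → E3) (p : ℝ × E3) : E3 :=
  WithLp.toLp 2 fun k ↦
    slabDeriv τ (0, e3 (k + 1)) F p (k + 2) - slabDeriv τ (0, e3 (k + 2)) F p (k + 1)

lemma slabDeriv_apply (hF : DifferentiableOn ℝ F (slab τ)) (hp : p ∈ slab τ) (v : ℝ × E3)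
    (i : Fin 3) : slabDeriv τ v (fun q ↦ F q i) p = slabDeriv τ v F p i :=
  slabDeriv_clm (EuclideanSpace.proj i : E3 →L[ℝ] ℝ) hF hp v

lemma slabDeriv_slabDeriv_apply (hF : ContDiffOn ℝ 2 F (slab τ)) (hp : p ∈ slab τ) (v w : ℝ × E3)
    (i : Fin 3) :
    slabDeriv τ v (fun q ↦ slabDeriv τ w F q i) p = slabDeriv τ v (slabDeriv τ w F) p i :=
  slabDeriv_apply ((contDiffOn_slabDeriv (m := 1) hF (by norm_num) w).differentiableOn one_ne_zero)
    hp v i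

lemma pd3_slice (hF : DifferentiableOn ℝ F (slab τ)) (ht : t ∈ Ico 0 τ) (x : E3) (i k : Fin 3) :
    pd3 (fun y ↦ F (t, y) k) i x = slabDeriv τ (0, e3 i) F (t, x) k := by
  rw [← slabDeriv_apply hF (mem_slab ht x)]
  exact fderiv_slice (g := fun q ↦ F q k) (differentiableOn_euclidean.1 hF k) ht x (e3 i)

lemma divg_slice (hF : DifferentiableOn ℝ F (slab τ)) (ht : t ∈ Ico 0 τ) (x : E3) :
    divg (fun y ↦ F (t, y)) x = slabDiv τ F (t, x) := by
  simp only [divg, slabDiv, pd3_slice hF ht]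

lemma slabDiv_eq_of_slice_eq {G : ℝ × E3 → E3} (hF : DifferentiableOn ℝ F (slab τ))
    (hG : DifferentiableOn ℝ G (slab τ)) (ht : t ∈ Ico 0 τ) (hFG : ∀ y, F (t, y) = G (t, y))
    (x : E3) : slabDiv τ F (t, x) = slabDiv τ G (t, x) := by
  simp only [← divg_slice hF ht, ← divg_slice hG ht, hFG]

lemma curl3_slice (hF : DifferentiableOn ℝ F (slab τ)) (ht : t ∈ Ico 0 τ) (x : E3) :
    curl3 (fun y ↦ F (t, y)) x = slabCurl τ F (t, x) := by
  ext k
  simp only [curl3, slabCurl, pd3_slice hF ht]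
  fin_cases k <;> rfl

lemma gradient_apply (g : E3 → ℝ) (x : E3) (i : Fin 3) : gradient g x i = fderiv ℝ g x (e3 i) := by
  rw [← inner_gradient_left, e3, EuclideanSpace.inner_single_right]
  simp

lemma gradient_slice (hφ : DifferentiableOn ℝ φ (slab τ)) (ht : t ∈ Ico 0 τ) (x : E3) :
    gradient (fun y ↦ φ (t, y)) x = slabGrad τ φ (t, x) := by
  ext i
  rw [gradient_apply, fderiv_slice hφ ht, slabGrad]

lemma slabDiv_congr {G : ℝ × E3 → E3} (hFG : EqOn F G (slab τ)) (hp : p ∈ slab τ) :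
    slabDiv τ F p = slabDiv τ G p := by
  simp only [slabDiv, slabDeriv_congr hFG hp]

lemma slabCurl_congr {G : ℝ × E3 → E3} (hFG : EqOn F G (slab τ)) (hp : p ∈ slab τ) :
    slabCurl τ F p = slabCurl τ G p := by
  simp only [slabCurl, slabDeriv_congr hFG hp]

lemma contDiffOn_slabGrad {m n : WithTop ℕ∞} (hφ : ContDiffOn ℝ n φ (slab τ)) (hmn : m + 1 ≤ n) :
    ContDiffOn ℝ m (slabGrad τ φ) (slab τ) :=
  contDiffOn_euclidean.2 fun i ↦ contDiffOn_slabDeriv hφ hmn (0, e3 i)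

lemma contDiffOn_slabDiv {m n : WithTop ℕ∞} (hF : ContDiffOn ℝ n F (slab τ)) (hmn : m + 1 ≤ n) :
    ContDiffOn ℝ m (slabDiv τ F) (slab τ) :=
  .sum fun i _ ↦ contDiffOn_euclidean.1 (contDiffOn_slabDeriv hF hmn (0, e3 i)) i

lemma contDiffOn_slabCurl {m n : WithTop ℕ∞} (hF : ContDiffOn ℝ n F (slab τ)) (hmn : m + 1 ≤ n) :
    ContDiffOn ℝ m (slabCurl τ F) (slab τ) :=
  contDiffOn_euclidean.2 fun k ↦
    (contDiffOn_euclidean.1 (contDiffOn_slabDeriv hF hmn (0, e3 (k + 1))) (k + 2)).sub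
      (contDiffOn_euclidean.1 (contDiffOn_slabDeriv hF hmn (0, e3 (k + 2))) (k + 1))

lemma slabDeriv_slabGrad_apply (hφ : ContDiffOn ℝ 2 φ (slab τ)) (hp : p ∈ slab τ) (v : ℝ × E3)
    (i : Fin 3) :
    slabDeriv τ v (slabGrad τ φ) p i = slabDeriv τ v (slabDeriv τ (0, e3 i) φ) p :=
  (slabDeriv_apply ((contDiffOn_slabGrad (m := 1) hφ (by norm_num)).differentiableOn one_ne_zero)
    hp v i).symm

lemma slabDeriv_slabDiv (hF : ContDiffOn ℝ 2 F (slab τ)) (hp : p ∈ slab τ) (v : ℝ × E3) :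
    slabDeriv τ v (slabDiv τ F) p = slabDiv τ (slabDeriv τ v F) p := by
  have hdiff (i : Fin 3) : DifferentiableOn ℝ (fun q ↦ slabDeriv τ (0, e3 i) F q i) (slab τ) :=
    differentiableOn_euclidean.1
      ((contDiffOn_slabDeriv (m := 1) hF (by norm_num) (0, e3 i)).differentiableOn one_ne_zero) i
  refine (slabDeriv_sum hdiff hp v).trans (Finset.sum_congr rfl fun i _ ↦ ?_)
  rw [slabDeriv_slabDeriv_apply hF hp, slabDeriv_comm hF hp]

lemma slabDeriv_slabCurl_apply (hF : ContDiffOn ℝ 2 F (slab τ)) (hp : p ∈ slab τ) (v : ℝ × E3)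
    (k : Fin 3) :
    slabDeriv τ v (slabCurl τ F) p k = slabDeriv τ v (slabDeriv τ (0, e3 (k + 1)) F) p (k + 2)
      - slabDeriv τ v (slabDeriv τ (0, e3 (k + 2)) F) p (k + 1) := by
  have hdiff (i j : Fin 3) : DifferentiableOn ℝ (fun q ↦ slabDeriv τ (0, e3 i) F q j) (slab τ) :=
    differentiableOn_euclidean.1
      ((contDiffOn_slabDeriv (m := 1) hF (by norm_num) (0, e3 i)).differentiableOn one_ne_zero) j
  rw [← slabDeriv_apply ((contDiffOn_slabCurl (m := 1) hF (by norm_num)).differentiableOn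
    one_ne_zero) hp, ← slabDeriv_slabDeriv_apply hF hp, ← slabDeriv_slabDeriv_apply hF hp]
  exact slabDeriv_sub (hdiff _ _) (hdiff _ _) hp v

lemma slabDeriv_slabCurl (hF : ContDiffOn ℝ 2 F (slab τ)) (hp : p ∈ slab τ) (v : ℝ × E3) :
    slabDeriv τ v (slabCurl τ F) p = slabCurl τ (slabDeriv τ v F) p := by
  ext k
  rw [slabDeriv_slabCurl_apply hF hp, slabDeriv_comm hF hp, slabDeriv_comm hF hp v, slabCurl]

lemma slabDiv_slabGrad (hφ : ContDiffOn ℝ 2 φ (slab τ)) (hp : p ∈ slab τ) :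
    slabDiv τ (slabGrad τ φ) p = ∑ i, slabDeriv τ (0, e3 i) (slabDeriv τ (0, e3 i) φ) p := by
  simp only [slabDiv, slabDeriv_slabGrad_apply hφ hp]

lemma slabCurl_slabGrad (hφ : ContDiffOn ℝ 2 φ (slab τ)) (hp : p ∈ slab τ) :
    slabCurl τ (slabGrad τ φ) p = 0 := by
  ext k
  simp only [slabCurl, slabDeriv_slabGrad_apply hφ hp]
  rw [slabDeriv_comm hφ hp, sub_self, PiLp.zero_apply]

lemma slabDiv_slabCurl (hF : ContDiffOn ℝ 2 F (slab τ)) (hp : p ∈ slab τ) :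
    slabDiv τ (slabCurl τ F) p = 0 := by
  simp only [slabDiv, slabDeriv_slabCurl_apply hF hp, Fin.sum_univ_three, Fin.reduceAdd]
  rw [slabDeriv_comm hF hp (0, e3 1) (0, e3 0), slabDeriv_comm hF hp (0, e3 2) (0, e3 0),
    slabDeriv_comm hF hp (0, e3 2) (0, e3 1)]
  ring

lemma slabCurl_slabCurl (hF : ContDiffOn ℝ 2 F (slab τ)) (hp : p ∈ slab τ) :
    slabCurl τ (slabCurl τ F) p
      = slabGrad τ (slabDiv τ F) p - ∑ i, slabDeriv τ (0, e3 i) (slabDeriv τ (0, e3 i) F) p := by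
  ext k
  simp only [slabCurl, slabGrad, slabDeriv_slabCurl_apply hF hp, slabDeriv_slabDiv hF hp, slabDiv,
    PiLp.sub_apply, Fin.sum_univ_three, PiLp.add_apply]
  fin_cases k <;> simp only [Fin.zero_eta, Fin.mk_one, Fin.reduceFinMk, Fin.reduceAdd] <;> ring

end SlabVectorCalculus

section Maxwell

variable {τ : ℝ} {φ : ℝ × E3 → ℝ} {A : ℝ × E3 → E3} {p : ℝ × E3}

/-- The electric field `-∂ₜA - ∇φ` of the potentials `(φ, A)` on the slab. -/
def slabElectric (τ : ℝ) (φ : ℝ × E3 → ℝ) (A : ℝ × E3 → E3) (p : ℝ × E3) : E3 :=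
  -slabDeriv τ (1, 0) A p - slabGrad τ φ p

/-- The quantity `∂ₜφ + div A` whose vanishing is the Lorenz gauge condition. -/
def lorenzGauge (τ : ℝ) (φ : ℝ × E3 → ℝ) (A : ℝ × E3 → E3) (p : ℝ × E3) : ℝ :=
  slabDeriv τ (1, 0) φ p + slabDiv τ A p

lemma contDiffOn_slabElectric (hφ : ContDiffOn ℝ 2 φ (slab τ)) (hA : ContDiffOn ℝ 2 A (slab τ)) :
    ContDiffOn ℝ 1 (slabElectric τ φ A) (slab τ) :=
  (contDiffOn_slabDeriv hA (by norm_num) _).neg.sub (contDiffOn_slabGrad hφ (by norm_num))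

lemma slabDeriv_slabElectric (hφ : ContDiffOn ℝ 2 φ (slab τ)) (hA : ContDiffOn ℝ 2 A (slab τ))
    (hp : p ∈ slab τ) (v : ℝ × E3) :
    slabDeriv τ v (slabElectric τ φ A) p
      = -slabDeriv τ v (slabDeriv τ (1, 0) A) p - slabDeriv τ v (slabGrad τ φ) p := by
  have hA' := (contDiffOn_slabDeriv (m := 1) hA (by norm_num) (1, 0)).differentiableOn one_ne_zero
  have hφ' := (contDiffOn_slabGrad (m := 1) hφ (by norm_num)).differentiableOn one_ne_zero
  exact slabDeriv_eq_of_hasFDerivWithinAt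
    ((hA' p hp).hasFDerivWithinAt.neg.sub (hφ' p hp).hasFDerivWithinAt) hp v

lemma slabDeriv_lorenzGauge (hφ : ContDiffOn ℝ 2 φ (slab τ)) (hA : ContDiffOn ℝ 2 A (slab τ))
    (hp : p ∈ slab τ) (v : ℝ × E3) :
    slabDeriv τ v (lorenzGauge τ φ A) p
      = slabDeriv τ v (slabDeriv τ (1, 0) φ) p + slabDeriv τ v (slabDiv τ A) p :=
  slabDeriv_add ((contDiffOn_slabDeriv (m := 1) hφ (by norm_num) _).differentiableOn one_ne_zero)
    ((contDiffOn_slabDiv (m := 1) hA (by norm_num)).differentiableOn one_ne_zero) hp v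

lemma slabDiv_slabElectric (hφ : ContDiffOn ℝ 2 φ (slab τ)) (hA : ContDiffOn ℝ 2 A (slab τ))
    (hp : p ∈ slab τ) :
    slabDiv τ (slabElectric τ φ A) p
      = waveOp τ e3 φ p - slabDeriv τ (1, 0) (lorenzGauge τ φ A) p := by
  have hdiv : slabDiv τ (slabElectric τ φ A) p
      = -slabDiv τ (slabDeriv τ (1, 0) A) p - slabDiv τ (slabGrad τ φ) p := by
    simp only [slabDiv, slabDeriv_slabElectric hφ hA hp, PiLp.sub_apply, PiLp.neg_apply,
      Finset.sum_sub_distrib, Finset.sum_neg_distrib]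
  rw [hdiv, slabDeriv_lorenzGauge hφ hA hp, slabDeriv_slabDiv hA hp, slabDiv_slabGrad hφ hp, waveOp]
  ring

lemma slabDeriv_slabElectric_sub_slabCurl (hφ : ContDiffOn ℝ 2 φ (slab τ))
    (hA : ContDiffOn ℝ 2 A (slab τ)) (hp : p ∈ slab τ) :
    slabDeriv τ (1, 0) (slabElectric τ φ A) p - slabCurl τ (slabCurl τ A) p
      = -waveOp τ e3 A p - slabGrad τ (lorenzGauge τ φ A) p := by
  have hgrad : slabGrad τ (lorenzGauge τ φ A) p
      = slabDeriv τ (1, 0) (slabGrad τ φ) p + slabGrad τ (slabDiv τ A) p := by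
    ext i
    rw [PiLp.add_apply, slabDeriv_slabGrad_apply hφ hp, slabDeriv_comm hφ hp]
    exact slabDeriv_lorenzGauge hφ hA hp (0, e3 i)
  rw [slabDeriv_slabElectric hφ hA hp, slabCurl_slabCurl hA hp, hgrad, waveOp]
  abel

lemma slabDeriv_slabCurl_add_slabCurl_slabElectric (hφ : ContDiffOn ℝ 2 φ (slab τ))
    (hA : ContDiffOn ℝ 2 A (slab τ)) (hp : p ∈ slab τ) :
    slabDeriv τ (1, 0) (slabCurl τ A) p + slabCurl τ (slabElectric τ φ A) p = 0 := by
  have hcurl : slabCurl τ (slabElectric τ φ A) p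
      = -slabCurl τ (slabDeriv τ (1, 0) A) p - slabCurl τ (slabGrad τ φ) p := by
    ext k
    simp only [slabCurl, slabDeriv_slabElectric hφ hA hp, PiLp.sub_apply, PiLp.neg_apply]
    ring
  rw [hcurl, slabDeriv_slabCurl hA hp, slabCurl_slabGrad hφ hp]
  abel

/-- The coordinate directions of space-time, the time direction being indexed by `none`. -/
def coordDir : Option (Fin 3) → ℝ × E3
  | none => (1, 0)
  | some i => (0, e3 i)

/-- The components of the four-potential `(φ, A)`, indexed as in `coordDir`. -/
def fourPotential (φ : ℝ × E3 → ℝ) (A : ℝ × E3 → E3) : Option (Fin 3) → ℝ × E3 → ℝ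
  | none => φ
  | some i => fun p ↦ A p i

lemma contDiffOn_fourPotential {n : WithTop ℕ∞} (hφ : ContDiffOn ℝ n φ (slab τ))
    (hA : ContDiffOn ℝ n A (slab τ)) (k : Option (Fin 3)) :
    ContDiffOn ℝ n (fourPotential φ A k) (slab τ) := by
  cases k with
  | none => exact hφ
  | some i => exact contDiffOn_euclidean.1 hA i

lemma fourDiv_fourPotential (hA : DifferentiableOn ℝ A (slab τ)) (hp : p ∈ slab τ) :
    fourDiv τ coordDir (fourPotential φ A) p = lorenzGauge τ φ A p := by
  rw [fourDiv, Fintype.sum_option, lorenzGauge, slabDiv]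
  simp only [coordDir, fourPotential, slabDeriv_apply hA hp]

lemma waveOp_fourPotential (hA : ContDiffOn ℝ 2 A (slab τ)) (k : Option (Fin 3)) :
    EqOn (waveOp τ e3 (fourPotential φ A k))
      (fourPotential (waveOp τ e3 φ) (waveOp τ e3 A) k) (slab τ) := by
  intro p hp
  cases k with
  | none => rfl
  | some i => exact waveOp_clm (EuclideanSpace.proj i : E3 →L[ℝ] ℝ) hA hp

lemma orthonormal_e3 : Orthonormal ℝ e3 := EuclideanSpace.orthonormal_single

lemma lorenzGauge_congr {φ' : ℝ × E3 → ℝ} {A' : ℝ × E3 → E3} (hφ : EqOn φ φ' (slab τ))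
    (hA : EqOn A A' (slab τ)) (hp : p ∈ slab τ) : lorenzGauge τ φ A p = lorenzGauge τ φ' A' p := by
  rw [lorenzGauge, slabDeriv_congr hφ hp, slabDiv_congr hA hp, lorenzGauge]

/-- Potentials `(φ, A)` that solve the wave equations with charge density `ρ` and current density
`j` on the slab. The sources satisfy the continuity equation `∂ₜρ + div j = 0`, written with
`lorenzGauge`, and the last two fields say that the Lorenz gauge condition and Gauss's law hold at
time `0`. -/
structure IsLorenzPotential (τ : ℝ) (φ : ℝ × E3 → ℝ) (A : ℝ × E3 → E3) (ρ : ℝ × E3 → ℝ)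
    (j : ℝ × E3 → E3) : Prop where
  contDiffOn_scalar : ContDiffOn ℝ 2 φ (slab τ)
  contDiffOn_vector : ContDiffOn ℝ 2 A (slab τ)
  contDiffOn_charge : ContDiffOn ℝ 1 ρ (slab τ)
  contDiffOn_current : ContDiffOn ℝ 1 j (slab τ)
  waveOp_scalar : EqOn (waveOp τ e3 φ) ρ (slab τ)
  waveOp_vector : EqOn (waveOp τ e3 A) j (slab τ)
  continuity : EqOn (lorenzGauge τ ρ j) 0 (slab τ)
  gauge_init : ∀ x, lorenzGauge τ φ A (0, x) = 0
  gauss_init : ∀ x, slabDiv τ (slabElectric τ φ A) (0, x) = ρ (0, x)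

variable {ρ : ℝ × E3 → ℝ} {j : ℝ × E3 → E3}

namespace IsLorenzPotential

theorem eqOn_lorenzGauge_zero (h : IsLorenzPotential τ φ A ρ j) :
    EqOn (lorenzGauge τ φ A) 0 (slab τ) := by
  intro p hp
  have hinit (x : E3) : (0, x) ∈ slab τ := mem_slab ⟨le_rfl, hp.1.1.trans_lt hp.1.2⟩ x
  have hρ := h.contDiffOn_charge.congr h.waveOp_scalar
  have hj := h.contDiffOn_current.congr h.waveOp_vector
  have hgauge : EqOn (fourDiv τ coordDir (fourPotential φ A)) (lorenzGauge τ φ A) (slab τ) :=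
    fun q hq ↦ fourDiv_fourPotential (h.contDiffOn_vector.differentiableOn two_ne_zero) hq
  have hwave := waveOp_fourPotential (φ := φ) h.contDiffOn_vector
  rw [← hgauge hp]
  refine eqOn_fourDiv_zero orthonormal_e3
    (contDiffOn_fourPotential h.contDiffOn_scalar h.contDiffOn_vector)
    (fun k ↦ (contDiffOn_fourPotential hρ hj k).congr (hwave k)) (fun q hq ↦ ?_) (fun x ↦ ?_)
    (fun x ↦ ?_) hp
  · refine (Finset.sum_congr rfl fun k _ ↦ slabDeriv_congr (hwave k) hq (coordDir k)).trans ?_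
    rw [← h.continuity hq, ← lorenzGauge_congr h.waveOp_scalar h.waveOp_vector hq]
    exact fourDiv_fourPotential (hj.differentiableOn one_ne_zero) hq
  · rw [hgauge (hinit x), h.gauge_init]
  · have hdiv := slabDiv_slabElectric h.contDiffOn_scalar h.contDiffOn_vector (hinit x)
    rw [h.gauss_init, h.waveOp_scalar (hinit x)] at hdiv
    rw [slabDeriv_congr hgauge (hinit x)]
    linarith

theorem gauss (h : IsLorenzPotential τ φ A ρ j) (hp : p ∈ slab τ) :
    slabDiv τ (slabElectric τ φ A) p = ρ p := by
  rw [slabDiv_slabElectric h.contDiffOn_scalar h.contDiffOn_vector hp, h.waveOp_scalar hp,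
    slabDeriv_eq_zero_of_eqOn h.eqOn_lorenzGauge_zero hp, sub_zero]

theorem ampere (h : IsLorenzPotential τ φ A ρ j) (hp : p ∈ slab τ) :
    slabDeriv τ (1, 0) (slabElectric τ φ A) p - slabCurl τ (slabCurl τ A) p = -j p := by
  have hgrad : slabGrad τ (lorenzGauge τ φ A) p = 0 := by
    ext i
    exact slabDeriv_eq_zero_of_eqOn h.eqOn_lorenzGauge_zero hp (0, e3 i)
  rw [slabDeriv_slabElectric_sub_slabCurl h.contDiffOn_scalar h.contDiffOn_vector hp,
    h.waveOp_vector hp, hgrad, sub_zero]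

end IsLorenzPotential

end Maxwell

section PhaseSpaceMoment

variable {E X V ι : Type*} [NormedAddCommGroup E] [NormedSpace ℝ E] [NormedAddCommGroup X]
  [NormedSpace ℝ X] [NormedAddCommGroup V] [NormedSpace ℝ V] [Fintype ι]
  {τ : ℝ} {e : ι → E} {K : Set X} {f u : ℝ × E → X → ℝ} {c : X → V} {p : ℝ × E}

/-- The moment `∫ f(p, ξ) c(ξ) dμ(ξ)` of a phase-space density `f`: the charge density for `c = 1`,
the current density when `c` is the velocity. -/
def phaseMoment [MeasurableSpace X] (μ : Measure X) (c : X → V) (f : ℝ × E → X → ℝ)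
    (p : ℝ × E) : V := ∫ ξ, f p ξ • c ξ ∂μ

lemma contDiffOn_uncurry_smul {n : WithTop ℕ∞} (hc : ContDiff ℝ n c)
    (hf : ContDiffOn ℝ n (Function.uncurry f) (slab τ ×ˢ univ)) :
    ContDiffOn ℝ n (Function.uncurry fun p ξ ↦ f p ξ • c ξ) (slab τ ×ˢ univ) :=
  hf.smul (hc.comp contDiff_snd).contDiffOn

lemma contDiffOn_phaseMoment [FiniteDimensional ℝ E] [MeasurableSpace X] [BorelSpace X]
    {μ : Measure X} [IsFiniteMeasureOnCompacts μ] (hK : IsCompact K) {n : ℕ} (hc : ContDiff ℝ n c)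
    (hf : ContDiffOn ℝ n (Function.uncurry f) (slab τ ×ˢ univ))
    (h0 : ∀ p ∈ slab τ, ∀ ξ ∉ K, f p ξ = 0) :
    ContDiffOn ℝ n (phaseMoment μ c f) (slab τ) :=
  contDiffOn_integral convex_slab uniqueDiffOn_slab hK (contDiffOn_uncurry_smul hc hf)
    fun p hp ξ hξ ↦ by rw [h0 p hp ξ hξ, zero_smul]

/-- Distributions of Liénard–Wiechert potentials: for each `ξ` the function `u(·, ξ)` solves
`(∂ₜ² - ∑ᵢ ∂²_{eᵢ}) u(·, ξ) = f(·, ξ)` on the slab with zero initial data, and both `u` and `f` are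
supported in `ξ ∈ K`. -/
structure IsLienardWiechertDistribution (τ : ℝ) (e : ι → E) (K : Set X) (f u : ℝ × E → X → ℝ) :
    Prop where
  isCompact : IsCompact K
  contDiffOn_source : ContDiffOn ℝ 1 (Function.uncurry f) (slab τ ×ˢ univ)
  source_eq_zero : ∀ p ∈ slab τ, ∀ ξ ∉ K, f p ξ = 0
  contDiffOn : ContDiffOn ℝ 2 (Function.uncurry u) (slab τ ×ˢ univ)
  eq_zero : ∀ p ∈ slab τ, ∀ ξ ∉ K, u p ξ = 0
  waveOp_eq : ∀ ξ, EqOn (waveOp τ e (u · ξ)) (f · ξ) (slab τ)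
  init : ∀ x ξ, u (0, x) ξ = 0
  init_deriv : ∀ x ξ, slabDeriv τ (1, 0) (u · ξ) (0, x) = 0

namespace IsLienardWiechertDistribution

lemma contDiffOn_slice (h : IsLienardWiechertDistribution τ e K f u) (ξ : X) :
    ContDiffOn ℝ 2 (u · ξ) (slab τ) :=
  h.contDiffOn.comp (f := fun p ↦ (p, ξ)) (by fun_prop) fun _ hp ↦ ⟨hp, mem_univ ξ⟩

variable [MeasurableSpace X] {μ : Measure X}

lemma phaseMoment_init (h : IsLienardWiechertDistribution τ e K f u) (x : E) :
    phaseMoment μ c u (0, x) = 0 := by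
  simp [phaseMoment, h.init]

variable [BorelSpace X] [IsFiniteMeasureOnCompacts μ]

lemma slabDeriv_phaseMoment_init (h : IsLienardWiechertDistribution τ e K f u)
    (hc : ContDiff ℝ 1 c) (hτ : 0 < τ) (x : E) :
    slabDeriv τ (1, 0) (phaseMoment μ c u) (0, x) = 0 := by
  have hp : (0, x) ∈ slab τ := mem_slab ⟨le_rfl, hτ⟩ x
  refine (slabDeriv_integral h.isCompact
    (contDiffOn_uncurry_smul hc (h.contDiffOn.of_le one_le_two))
    (fun q hq ξ hξ ↦ by rw [h.eq_zero q hq ξ hξ, zero_smul]) hp _).trans ?_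
  refine integral_eq_zero_of_ae (.of_forall fun ξ ↦ ?_)
  have hclm := slabDeriv_clm (.toSpanSingleton ℝ (c ξ))
    ((h.contDiffOn_slice ξ).differentiableOn two_ne_zero) hp (1, 0)
  rwa [h.init_deriv, map_zero] at hclm

lemma waveOp_phaseMoment (h : IsLienardWiechertDistribution τ e K f u) (hc : ContDiff ℝ 2 c) :
    EqOn (waveOp τ e (phaseMoment μ c u)) (phaseMoment μ c f) (slab τ) := by
  intro p hp
  refine (waveOp_integral h.isCompact (contDiffOn_uncurry_smul hc h.contDiffOn)
    (fun q hq ξ hξ ↦ by rw [h.eq_zero q hq ξ hξ, zero_smul]) hp).trans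
    (integral_congr_ae (.of_forall fun ξ ↦ ?_))
  have hclm := waveOp_clm (e := e) (.toSpanSingleton ℝ (c ξ)) (h.contDiffOn_slice ξ) hp
  rwa [h.waveOp_eq ξ hp] at hclm

end IsLienardWiechertDistribution

end PhaseSpaceMoment

section RetardedPotentials

variable {X : Type*} [NormedAddCommGroup X] [NormedSpace ℝ X] [MeasurableSpace X] [BorelSpace X]
  {μ : Measure X} [IsFiniteMeasureOnCompacts μ] {τ : ℝ} {K : Set X} {f u : ℝ × E3 → X → ℝ}
  {c : X → E3} {A₀ : ℝ × E3 → E3}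

namespace IsLienardWiechertDistribution

lemma slabElectric_init (h : IsLienardWiechertDistribution τ e3 K f u) (hτ : 0 < τ)
    (hc : ContDiff ℝ 2 c) (hA₀ : ContDiffOn ℝ 2 A₀ (slab τ)) (x : E3) :
    slabElectric τ (phaseMoment μ (fun _ ↦ (1 : ℝ)) u) (fun p ↦ A₀ p + phaseMoment μ c u p) (0, x)
      = -slabDeriv τ (1, 0) A₀ (0, x) := by
  have h0 : (0 : ℝ) ∈ Ico 0 τ := ⟨le_rfl, hτ⟩
  have hφ : ContDiffOn ℝ 2 (phaseMoment μ (fun _ ↦ (1 : ℝ)) u) (slab τ) :=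
    contDiffOn_phaseMoment h.isCompact contDiff_const h.contDiffOn h.eq_zero
  have hA : ContDiffOn ℝ 2 (phaseMoment μ c u) (slab τ) :=
    contDiffOn_phaseMoment h.isCompact hc h.contDiffOn h.eq_zero
  have hgrad : slabGrad τ (phaseMoment μ (fun _ ↦ (1 : ℝ)) u) (0, x) = 0 := by
    ext i
    exact slabDeriv_space_eq_zero (hφ.differentiableOn two_ne_zero) h0 h.phaseMoment_init x (e3 i)
  rw [slabElectric, hgrad, sub_zero, slabDeriv_add (hA₀.differentiableOn two_ne_zero)
    (hA.differentiableOn two_ne_zero) (mem_slab h0 x),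
    h.slabDeriv_phaseMoment_init (hc.of_le one_le_two) hτ, add_zero]

theorem isLorenzPotential (h : IsLienardWiechertDistribution τ e3 K f u) (hτ : 0 < τ)
    (hc : ContDiff ℝ 2 c)
    (hcons : EqOn (lorenzGauge τ (phaseMoment μ (fun _ ↦ (1 : ℝ)) f) (phaseMoment μ c f)) 0
      (slab τ))
    (hA₀ : ContDiffOn ℝ 2 A₀ (slab τ)) (hwave : EqOn (waveOp τ e3 A₀) 0 (slab τ))
    (hdiv : ∀ x, slabDiv τ A₀ (0, x) = 0)
    (hgauss : ∀ x, slabDiv τ (fun p ↦ -slabDeriv τ (1, 0) A₀ p) (0, x)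
      = phaseMoment μ (fun _ ↦ (1 : ℝ)) f (0, x)) :
    IsLorenzPotential τ (phaseMoment μ (fun _ ↦ (1 : ℝ)) u) (fun p ↦ A₀ p + phaseMoment μ c u p)
      (phaseMoment μ (fun _ ↦ (1 : ℝ)) f) (phaseMoment μ c f) := by
  have h0 : (0 : ℝ) ∈ Ico 0 τ := ⟨le_rfl, hτ⟩
  have hφ : ContDiffOn ℝ 2 (phaseMoment μ (fun _ ↦ (1 : ℝ)) u) (slab τ) :=
    contDiffOn_phaseMoment h.isCompact contDiff_const h.contDiffOn h.eq_zero
  have hA : ContDiffOn ℝ 2 (phaseMoment μ c u) (slab τ) :=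
    contDiffOn_phaseMoment h.isCompact hc h.contDiffOn h.eq_zero
  refine
    { contDiffOn_scalar := hφ
      contDiffOn_vector := hA₀.add hA
      contDiffOn_charge :=
        contDiffOn_phaseMoment h.isCompact contDiff_const h.contDiffOn_source h.source_eq_zero
      contDiffOn_current := contDiffOn_phaseMoment h.isCompact (hc.of_le one_le_two)
        h.contDiffOn_source h.source_eq_zero
      waveOp_scalar := h.waveOp_phaseMoment contDiff_const
      waveOp_vector := fun p hp ↦ ?_
      continuity := hcons
      gauge_init := fun x ↦ ?_
      gauss_init := fun x ↦ ?_ }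
  · rw [waveOp_add hA₀ hA hp, hwave hp, h.waveOp_phaseMoment hc hp, Pi.zero_apply, zero_add]
  · rw [lorenzGauge, h.slabDeriv_phaseMoment_init contDiff_const hτ, zero_add]
    exact (slabDiv_eq_of_slice_eq ((hA₀.add hA).differentiableOn two_ne_zero)
      (hA₀.differentiableOn two_ne_zero) h0 (fun y ↦ by rw [h.phaseMoment_init, add_zero])
      x).trans (hdiv x)
  · exact (slabDiv_eq_of_slice_eq
      ((contDiffOn_slabElectric hφ (hA₀.add hA)).differentiableOn one_ne_zero)
      ((contDiffOn_slabDeriv (m := 1) hA₀ (by norm_num) _).neg.differentiableOn one_ne_zero) h0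
      (h.slabElectric_init hτ hc hA₀) x).trans (hgauss x)

end IsLienardWiechertDistribution

end RetardedPotentials

section Fields

variable {τ t : ℝ} {φ : ℝ → E3 → ℝ} {A F : ℝ → E3 → E3} {G : ℝ × E3 → E3}

/-- The electric field `-∂ₜA - ∇φ` of time-dependent potentials, with the one-sided time derivative
`timeD`; `EP` is the case of the potentials `phiP` and `AP`. -/
def electricField (φ : ℝ → E3 → ℝ) (A : ℝ → E3 → E3) (t : ℝ) (x : E3) : E3 :=
  -timeD (fun s ↦ A s x) t - gradient (φ t) x

lemma timeD_eq_slabDeriv (hG : DifferentiableOn ℝ G (slab τ))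
    (hFG : EqOn (Function.uncurry F) G (slab τ)) (ht : t ∈ Ico 0 τ) (x : E3) :
    timeD (fun s ↦ F s x) t = slabDeriv τ (1, 0) G (t, x) :=
  (timeD_slice (hG.congr hFG) ht x).trans (slabDeriv_congr hFG (mem_slab ht x) _)

lemma divg_eq_slabDiv (hG : DifferentiableOn ℝ G (slab τ))
    (hFG : EqOn (Function.uncurry F) G (slab τ)) (ht : t ∈ Ico 0 τ) (x : E3) :
    divg (F t) x = slabDiv τ G (t, x) :=
  (divg_slice (hG.congr hFG) ht x).trans (slabDiv_congr hFG (mem_slab ht x))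

lemma curl3_eq_slabCurl (hG : DifferentiableOn ℝ G (slab τ))
    (hFG : EqOn (Function.uncurry F) G (slab τ)) (ht : t ∈ Ico 0 τ) (x : E3) :
    curl3 (F t) x = slabCurl τ G (t, x) :=
  (curl3_slice (hG.congr hFG) ht x).trans (slabCurl_congr hFG (mem_slab ht x))

lemma uncurry_electricField_eqOn (hφ : DifferentiableOn ℝ (Function.uncurry φ) (slab τ))
    (hA : DifferentiableOn ℝ (Function.uncurry A) (slab τ)) :
    EqOn (Function.uncurry (electricField φ A))
      (slabElectric τ (Function.uncurry φ) (Function.uncurry A)) (slab τ) := by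
  rintro ⟨t, x⟩ ⟨ht, -⟩
  exact congrArg₂ (fun a b ↦ -a - b) (timeD_slice hA ht x) (gradient_slice hφ ht x)

lemma uncurry_curl3_eqOn (hA : DifferentiableOn ℝ (Function.uncurry A) (slab τ)) :
    EqOn (Function.uncurry fun t ↦ curl3 (A t)) (slabCurl τ (Function.uncurry A)) (slab τ) :=
  fun p hp ↦ curl3_slice hA hp.1 p.2

lemma divg_curl3 (hA : ContDiffOn ℝ 2 (Function.uncurry A) (slab τ)) (ht : t ∈ Ico 0 τ) (x : E3) :
    divg (curl3 (A t)) x = 0 :=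
  (divg_eq_slabDiv (F := fun t ↦ curl3 (A t))
    ((contDiffOn_slabCurl (m := 1) hA (by norm_num)).differentiableOn one_ne_zero)
    (uncurry_curl3_eqOn (hA.differentiableOn two_ne_zero)) ht x).trans
    (slabDiv_slabCurl hA (mem_slab ht x))

lemma timeD_curl3_add_curl3_electricField (hφ : ContDiffOn ℝ 2 (Function.uncurry φ) (slab τ))
    (hA : ContDiffOn ℝ 2 (Function.uncurry A) (slab τ)) (ht : t ∈ Ico 0 τ) (x : E3) :
    timeD (fun s ↦ curl3 (A s) x) t + curl3 (electricField φ A t) x = 0 := by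
  rw [timeD_eq_slabDeriv (F := fun t ↦ curl3 (A t))
      ((contDiffOn_slabCurl (m := 1) hA (by norm_num)).differentiableOn one_ne_zero)
      (uncurry_curl3_eqOn (hA.differentiableOn two_ne_zero)) ht x,
    curl3_eq_slabCurl ((contDiffOn_slabElectric hφ hA).differentiableOn one_ne_zero)
      (uncurry_electricField_eqOn (hφ.differentiableOn two_ne_zero)
        (hA.differentiableOn two_ne_zero)) ht x,
    slabDeriv_slabCurl_add_slabCurl_slabElectric hφ hA (mem_slab ht x)]

namespace IsLorenzPotential

variable {ρ : ℝ × E3 → ℝ} {j : ℝ × E3 → E3}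

lemma divg_electricField (h : IsLorenzPotential τ (Function.uncurry φ) (Function.uncurry A) ρ j)
    (ht : t ∈ Ico 0 τ) (x : E3) : divg (electricField φ A t) x = ρ (t, x) :=
  have hφ := h.contDiffOn_scalar
  have hA := h.contDiffOn_vector
  (divg_eq_slabDiv ((contDiffOn_slabElectric hφ hA).differentiableOn one_ne_zero)
    (uncurry_electricField_eqOn (hφ.differentiableOn two_ne_zero)
      (hA.differentiableOn two_ne_zero)) ht x).trans (h.gauss (mem_slab ht x))

lemma timeD_electricField_sub_curl3_curl3
    (h : IsLorenzPotential τ (Function.uncurry φ) (Function.uncurry A) ρ j)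
    (ht : t ∈ Ico 0 τ) (x : E3) :
    timeD (fun s ↦ electricField φ A s x) t - curl3 (curl3 (A t)) x = -j (t, x) := by
  have hφ := h.contDiffOn_scalar
  have hA := h.contDiffOn_vector
  rw [timeD_eq_slabDeriv ((contDiffOn_slabElectric hφ hA).differentiableOn one_ne_zero)
      (uncurry_electricField_eqOn (hφ.differentiableOn two_ne_zero)
        (hA.differentiableOn two_ne_zero)) ht x,
    curl3_eq_slabCurl (F := fun t ↦ curl3 (A t))
      ((contDiffOn_slabCurl (m := 1) hA (by norm_num)).differentiableOn one_ne_zero)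
      (uncurry_curl3_eqOn (hA.differentiableOn two_ne_zero)) ht x,
    h.ampere (mem_slab ht x)]

end IsLorenzPotential

end Fields

section LienardWiechert

lemma contDiff_vrel {n : WithTop ℕ∞} : ContDiff ℝ n vrel :=
  (((contDiff_const.add (contDiff_norm_sq ℝ)).sqrt fun ξ ↦ by positivity).inv
    fun ξ ↦ by positivity).smul contDiff_id

lemma phaseMoment_one {E X : Type*} [MeasurableSpace X] (μ : Measure X) (f : ℝ × E → X → ℝ) :
    phaseMoment μ (fun _ ↦ (1 : ℝ)) f = fun p ↦ ∫ ξ, f p ξ ∂μ := by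
  ext p
  simp only [phaseMoment, smul_eq_mul, mul_one]

lemma contDiffOn_uncurry_uncurry {E X V : Type*} [NormedAddCommGroup E] [NormedSpace ℝ E]
    [NormedAddCommGroup X] [NormedSpace ℝ X] [NormedAddCommGroup V] [NormedSpace ℝ V]
    {n : WithTop ℕ∞} {τ : ℝ} {g : ℝ → E → X → V}
    (hg : ContDiffOn ℝ n (fun p : ℝ × E × X ↦ g p.1 p.2.1 p.2.2) (Ico 0 τ ×ˢ univ)) :
    ContDiffOn ℝ n (Function.uncurry (Function.uncurry g)) (slab τ ×ˢ univ) :=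
  hg.comp (f := fun q : (ℝ × E) × X ↦ (q.1.1, q.1.2, q.2)) (by fun_prop)
    fun _ hq ↦ ⟨hq.1.1, mem_univ _⟩

variable {τ r : ℝ} {f u : ℝ → E3 → E3 → ℝ} {A0 : ℝ → E3 → E3}

lemma eqOn_lorenzGauge_zero_of_eq_Ioo {ρ : ℝ × E3 → ℝ} {j : ℝ × E3 → E3}
    (hρ : ContDiffOn ℝ 1 ρ (slab τ)) (hj : ContDiffOn ℝ 1 j (slab τ))
    (hcons : ∀ t ∈ Ioo 0 τ, ∀ x,
      deriv (fun s ↦ ρ (s, x)) t + divg (fun y ↦ j (t, y)) x = 0) :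
    EqOn (lorenzGauge τ ρ j) 0 (slab τ) := by
  refine eqOn_slab_of_eq_Ioo ((continuousOn_slabDeriv hρ _).add
    (contDiffOn_slabDiv (m := 0) hj (by norm_num)).continuousOn) continuousOn_const fun t ht x ↦ ?_
  rw [lorenzGauge, ← (hasDerivAt_slice (hρ.differentiableOn one_ne_zero) ht x).deriv,
    ← divg_slice (hj.differentiableOn one_ne_zero) (Ioo_subset_Ico_self ht), hcons t ht,
    Pi.zero_apply]

lemma isLienardWiechertDistribution_of_lapx (hτ : 0 < τ)
    (hf : ContDiffOn ℝ 1 (fun p : ℝ × E3 × E3 ↦ f p.1 p.2.1 p.2.2) (Ico 0 τ ×ˢ univ))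
    (hfsupp : ∀ t ∈ Ico 0 τ, ∀ x ξ : E3, r < ‖ξ‖ → f t x ξ = 0)
    (hu : ContDiffOn ℝ 2 (fun p : ℝ × E3 × E3 ↦ u p.1 p.2.1 p.2.2) (Ico 0 τ ×ˢ univ))
    (husupp : ∀ t ∈ Ico 0 τ, ∀ x ξ : E3, r < ‖ξ‖ → u t x ξ = 0)
    (hwave : ∀ ξ : E3, ∀ t ∈ Ioo 0 τ, ∀ x : E3,
      deriv (fun s ↦ deriv (fun s' ↦ u s' x ξ) s) t - lapx (fun y ↦ u t y ξ) x = f t x ξ)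
    (hinit : ∀ x ξ : E3, u 0 x ξ = 0) (hinit' : ∀ x ξ : E3, timeD (fun s ↦ u s x ξ) 0 = 0) :
    IsLienardWiechertDistribution τ e3 (closedBall 0 r) (Function.uncurry f)
      (Function.uncurry u) := by
  have hf' := contDiffOn_uncurry_uncurry hf
  have hu' := contDiffOn_uncurry_uncurry hu
  have hslice (ξ : E3) : ContDiffOn ℝ 2 (Function.uncurry u · ξ) (slab τ) :=
    hu'.comp (f := fun p ↦ (p, ξ)) (by fun_prop) fun _ hp ↦ ⟨hp, mem_univ ξ⟩
  have hlt {ξ : E3} (hξ : ξ ∉ closedBall 0 r) : r < ‖ξ‖ := by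
    rwa [mem_closedBall_zero_iff, not_le] at hξ
  exact
    { isCompact := isCompact_closedBall 0 r
      contDiffOn_source := hf'
      source_eq_zero := fun p hp ξ hξ ↦ hfsupp p.1 hp.1 p.2 ξ (hlt hξ)
      contDiffOn := hu'
      eq_zero := fun p hp ξ hξ ↦ husupp p.1 hp.1 p.2 ξ (hlt hξ)
      waveOp_eq := fun ξ ↦ eqOn_waveOp_of_eq_Ioo (hslice ξ)
        (hf'.continuousOn.comp (f := fun p ↦ (p, ξ)) (by fun_prop) fun _ hp ↦ ⟨hp, mem_univ ξ⟩)
        (hwave ξ)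
      init := hinit
      init_deriv := fun x ξ ↦ (timeD_slice ((hslice ξ).differentiableOn two_ne_zero)
        ⟨le_rfl, hτ⟩ x).symm.trans (hinit' x ξ) }

variable {K : Set E3}

lemma uncurry_phiP (u : ℝ → E3 → E3 → ℝ) :
    Function.uncurry (phiP u) = phaseMoment volume (fun _ ↦ (1 : ℝ)) (Function.uncurry u) :=
  (phaseMoment_one volume (Function.uncurry u)).symm

lemma AP_init (h : IsLienardWiechertDistribution τ e3 K (Function.uncurry f) (Function.uncurry u)) :
    AP A0 u 0 = A0 0 :=
  funext fun x ↦ add_eq_left.2 (h.phaseMoment_init x)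

lemma EP_init (h : IsLienardWiechertDistribution τ e3 K (Function.uncurry f) (Function.uncurry u))
    (hτ : 0 < τ) (hA0 : ContDiffOn ℝ 2 (Function.uncurry A0) (slab τ)) (x : E3) :
    EP A0 u 0 x = -timeD (fun s ↦ A0 s x) 0 := by
  have h0 : (0 : ℝ) ∈ Ico 0 τ := ⟨le_rfl, hτ⟩
  have hφ : DifferentiableOn ℝ (Function.uncurry (phiP u)) (slab τ) := by
    rw [uncurry_phiP]
    exact (contDiffOn_phaseMoment h.isCompact contDiff_const h.contDiffOn
      h.eq_zero).differentiableOn two_ne_zero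
  have hA : DifferentiableOn ℝ (Function.uncurry (AP A0 u)) (slab τ) :=
    (hA0.add (contDiffOn_phaseMoment h.isCompact contDiff_vrel h.contDiffOn
      h.eq_zero)).differentiableOn two_ne_zero
  refine (uncurry_electricField_eqOn hφ hA (mem_slab h0 x)).trans ?_
  rw [uncurry_phiP]
  refine (h.slabElectric_init hτ contDiff_vrel hA0 x).trans ?_
  rw [← timeD_slice (hA0.differentiableOn two_ne_zero) h0]
  rfl

theorem isLorenzPotential_phiP_AP
    (h : IsLienardWiechertDistribution τ e3 K (Function.uncurry f) (Function.uncurry u))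
    (hτ : 0 < τ)
    (hcons : ∀ t ∈ Ioo 0 τ, ∀ x : E3, deriv (fun s ↦ ∫ ξ : E3, f s x ξ) t
      + divg (fun y ↦ ∫ ξ : E3, f t y ξ • vrel ξ) x = 0)
    (hA0 : ContDiffOn ℝ 2 (Function.uncurry A0) (slab τ))
    (hwave : ∀ t ∈ Ioo 0 τ, ∀ x : E3,
      deriv (fun s ↦ deriv (fun s' ↦ A0 s' x) s) t - lapxV (A0 t) x = 0)
    (hdiv : ∀ x, divg (A0 0) x = 0)
    (hgauss : ∀ x, divg (fun y ↦ -timeD (fun s ↦ A0 s y) 0) x = ∫ ξ, f 0 x ξ) :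
    IsLorenzPotential τ (Function.uncurry (phiP u)) (Function.uncurry (AP A0 u))
      (fun p ↦ ∫ ξ, f p.1 p.2 ξ) (fun p ↦ ∫ ξ, f p.1 p.2 ξ • vrel ξ) := by
  have h0 : (0 : ℝ) ∈ Ico 0 τ := ⟨le_rfl, hτ⟩
  have hρ : phaseMoment volume (fun _ ↦ (1 : ℝ)) (Function.uncurry f)
      = fun p ↦ ∫ ξ, f p.1 p.2 ξ := phaseMoment_one volume (Function.uncurry f)
  have hA0' := hA0.differentiableOn two_ne_zero
  have hA0t : DifferentiableOn ℝ (fun p ↦ -slabDeriv τ (1, 0) (Function.uncurry A0) p) (slab τ) :=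
    (contDiffOn_slabDeriv (m := 1) hA0 (by norm_num) _).neg.differentiableOn one_ne_zero
  rw [uncurry_phiP, ← hρ]
  refine h.isLorenzPotential (A₀ := Function.uncurry A0) hτ contDiff_vrel ?_ hA0
    (eqOn_waveOp_of_eq_Ioo hA0 continuousOn_const hwave)
    (fun x ↦ (divg_slice hA0' h0 x).symm.trans (hdiv x)) fun x ↦ ?_
  · refine eqOn_lorenzGauge_zero_of_eq_Ioo
      (contDiffOn_phaseMoment h.isCompact contDiff_const h.contDiffOn_source h.source_eq_zero)
      (contDiffOn_phaseMoment h.isCompact contDiff_vrel h.contDiffOn_source h.source_eq_zero) ?_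
    rwa [hρ]
  · rw [hρ, ← divg_slice hA0t h0]
    simp only [← timeD_slice hA0' h0]
    exact hgauss x

end LienardWiechert

/-- **Maxwell's equations from distributions of Lienard–Wiechert potentials**: with
`φ = ∫ u dξ`, `A = A⁰ + ∫ v(ξ) u dξ`, `E = -∂ₜA - ∇ₓφ` and `B = curlₓA`, the fields
`(E,B)` solve the Maxwell system with source `(ρ_f, j_f)` and initial data
`(E^in, B^in)`. -/
theorem maxwell_from_lienard_wiechert
    (τ r : ℝ) (hτ : 0 < τ) (hr : 0 < r)
    (f u : ℝ → E3 → E3 → ℝ) (Ein AI : E3 → E3) (A0 : ℝ → E3 → E3)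
    -- `f` is `C¹` on `[0,τ)×ℝ³×ℝ³`, vanishes for `|ξ| > r`, and satisfies the local
    -- conservation law `∂ₜρ_f + divₓ j_f = 0`
    (hfreg : ContDiffOn ℝ 1 (fun p : ℝ × E3 × E3 => f p.1 p.2.1 p.2.2)
      (Set.Ico 0 τ ×ˢ (Set.univ : Set (E3 × E3))))
    (hfsupp : ∀ t ∈ Set.Ico 0 τ, ∀ x ξ : E3, r < ‖ξ‖ → f t x ξ = 0)
    (hcons : ∀ t ∈ Set.Ioo 0 τ, ∀ x : E3,
      deriv (fun s => ∫ ξ : E3, f s x ξ) t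
        + divg (fun y => ∫ ξ : E3, f t y ξ • vrel ξ) x = 0)
    -- `u` is `C²` on `[0,τ)×ℝ³×ℝ³`, vanishes for `|ξ| > r`, and solves, for each fixed
    -- `ξ`, the wave equation `∂ₜ²u - Δₓu = f` with vanishing initial data
    (hureg : ContDiffOn ℝ 2 (fun p : ℝ × E3 × E3 => u p.1 p.2.1 p.2.2)
      (Set.Ico 0 τ ×ˢ (Set.univ : Set (E3 × E3))))
    (husupp : ∀ t ∈ Set.Ico 0 τ, ∀ x ξ : E3, r < ‖ξ‖ → u t x ξ = 0)
    (huwave : ∀ ξ : E3, ∀ t ∈ Set.Ioo 0 τ, ∀ x : E3,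
      deriv (fun s => deriv (fun s' => u s' x ξ) s) t - lapx (fun y => u t y ξ) x = f t x ξ)
    (hu0 : ∀ x ξ : E3, u 0 x ξ = 0)
    (hu0t : ∀ x ξ : E3, timeD (fun s => u s x ξ) 0 = 0)    -- the initial fields are `C²` and compatible
    (Bin : E3 → E3)
    (hEinreg : ContDiff ℝ 2 Ein) (hBinreg : ContDiff ℝ 2 Bin)
    (hdivBin : ∀ x : E3, divg Bin x = 0)
    (hdivEin : ∀ x : E3, divg Ein x = ∫ ξ : E3, f 0 x ξ)
    -- `A_I` is `C²`, divergence free, with curl `B^in`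
    (hAIreg : ContDiff ℝ 2 AI)
    (hdivAI : ∀ x : E3, divg AI x = 0)
    (hcurlAI : ∀ x : E3, curl3 AI x = Bin x)
    -- `A⁰` is `C²` and solves the homogeneous wave equation with data `(A_I, -E^in)`
    (hA0reg : ContDiffOn ℝ 2 (fun p : ℝ × E3 => A0 p.1 p.2)
      (Set.Ico 0 τ ×ˢ (Set.univ : Set E3)))
    (hA0wave : ∀ t ∈ Set.Ioo 0 τ, ∀ x : E3,
      deriv (fun s => deriv (fun s' => A0 s' x) s) t - lapxV (A0 t) x = 0)
    (hA00 : ∀ x : E3, A0 0 x = AI x)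
    (hA00t : ∀ x : E3, timeD (fun s => A0 s x) 0 = -Ein x) :
    (∀ t ∈ Set.Ioo 0 τ, ∀ x : E3,
        timeD (fun s => EP A0 u s x) t - curl3 (BP A0 u t) x
          = -∫ ξ : E3, f t x ξ • vrel ξ)
    ∧ (∀ t ∈ Set.Ioo 0 τ, ∀ x : E3, divg (EP A0 u t) x = ∫ ξ : E3, f t x ξ)
    ∧ (∀ t ∈ Set.Ioo 0 τ, ∀ x : E3,
        timeD (fun s => BP A0 u s x) t + curl3 (EP A0 u t) x = 0)
    ∧ (∀ t ∈ Set.Ioo 0 τ, ∀ x : E3, divg (BP A0 u t) x = 0)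
    ∧ (∀ x : E3, EP A0 u 0 x = Ein x)
    ∧ (∀ x : E3, BP A0 u 0 x = Bin x) := by
  have hu := isLienardWiechertDistribution_of_lapx hτ hfreg hfsupp hureg husupp huwave hu0 hu0t
  have hE0 (x : E3) : -timeD (fun s ↦ A0 s x) 0 = Ein x := by rw [hA00t, neg_neg]
  have hpot := isLorenzPotential_phiP_AP hu hτ hcons hA0reg hA0wave
    (fun x ↦ by rw [funext hA00, hdivAI]) (fun x ↦ by rw [funext hE0, hdivEin])
  have hφ := hpot.contDiffOn_scalar
  have hA := hpot.contDiffOn_vector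
  refine ⟨fun t ht ↦ hpot.timeD_electricField_sub_curl3_curl3 (Ioo_subset_Ico_self ht),
    fun t ht ↦ hpot.divg_electricField (Ioo_subset_Ico_self ht),
    fun t ht ↦ timeD_curl3_add_curl3_electricField hφ hA (Ioo_subset_Ico_self ht),
    fun t ht ↦ divg_curl3 hA (Ioo_subset_Ico_self ht),
    fun x ↦ (EP_init hu hτ hA0reg x).trans (hE0 x), fun x ↦ ?_⟩
  rw [BP, AP_init hu, funext hA00, hcurlAI]
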